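/- arXiv:1304.0906 — 2 statements merged into one kernel-verified Lean document; each statement's English description precedes it below -/
import Mathlib

section
/- Let K be a field, t ∈ K^× and κ = (κ_1,…,κ_ℓ) ∈ Z^ℓ a multicharge. Then the following are equivalent: (i) (K,t) separates Std(P_n), that is, [n]!_t · ∏_{1≤l<m≤ℓ} ∏_{−n<d<n} [κ_l − κ_m + d]_t ≠ 0 in K; (ii) for all standard tableaux s, t ∈ Std(P_n), s = t if and only if [c_r(s)]_t = [c_r(t)]_t for all 1 ≤ r ≤ n. -/
open scoped BigOperators
open scoped Classical

namespace Paper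

/-! ## Quantum integers -/

/-- The quantum integer `[d]_x` in a field, for `d ∈ ℤ`. -/
noncomputable def qint {K : Type*} [Field K] (x : K) (d : ℤ) : K :=
  if 0 ≤ d then ∑ k ∈ Finset.range d.toNat, x ^ k
  else -∑ k ∈ Finset.range (-d).toNat, x ^ (-((k : ℤ) + 1))

/-- The quantum integer `[d]_t` in a commutative ring, for an invertible `t` and `d ∈ ℤ`. -/
def qintU {O : Type*} [CommRing O] (t : Oˣ) (d : ℤ) : O :=
  if 0 ≤ d then ∑ k ∈ Finset.range d.toNat, (t : O) ^ k
  else -∑ k ∈ Finset.range (-d).toNat, ((t ^ (-((k : ℤ) + 1)) : Oˣ) : O)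

/-! ## Nodes, multipartitions and standard tableaux -/

/-- A node `(l, r, c)`: component `l`, row `r`, column `c` (all `0`-based). -/
abbrev Node : Type := ℕ × ℕ × ℕ

/-- `nodeBelow A B` holds when `B` is strictly below `A`, i.e. `A < B` lexicographically. -/
def nodeBelow (A B : Node) : Prop :=
  A.1 < B.1 ∨ (A.1 = B.1 ∧ (A.2.1 < B.2.1 ∨ (A.2.1 = B.2.1 ∧ A.2.2 < B.2.2)))

/-- An `ℓ`-multipartition of `n`. -/
structure Multipartition (ℓ n : ℕ) : Type where
  part : ℕ → ℕ → ℕ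
  comp_bound : ∀ l, ℓ ≤ l → ∀ r, part l r = 0
  antitone : ∀ l, Antitone (part l)
  row_bound : ∀ l r, n ≤ r → part l r = 0
  size : (∑ l ∈ Finset.range ℓ, ∑ r ∈ Finset.range n, part l r) = n

/-- The diagram of a multipartition. -/
def Multipartition.diagram {ℓ n : ℕ} (μ : Multipartition ℓ n) : Set Node :=
  {A | A.2.2 < μ.part A.1 A.2.1}

/-- A standard tableau: a bijection from the diagram of its shape onto `{1, …, n}`
that increases along rows and down columns of each component (it takes the value
`0` off the diagram, so that it is determined by its entries). -/
structure StdTableau (ℓ n : ℕ) : Type where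
  shape : Multipartition ℓ n
  entry : Node → ℕ
  entry_zero : ∀ A, A ∉ shape.diagram → entry A = 0
  bijOn : Set.BijOn entry shape.diagram (Set.Icc 1 n)
  row_inc : ∀ l r c, (l, r, c + 1) ∈ shape.diagram → entry (l, r, c) < entry (l, r, c + 1)
  col_inc : ∀ l r c, (l, r + 1, c) ∈ shape.diagram → entry (l, r, c) < entry (l, r + 1, c)

/-- The node of a standard tableau containing the entry `k`. -/
noncomputable def StdTableau.node {ℓ n : ℕ} (T : StdTableau ℓ n) (k : ℕ) : Node :=
  Function.invFunOn T.entry T.shape.diagram k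

/-- The content `c_k(T) = κ_l + c - r` of the entry `k` in the tableau `T`
(`1 ≤ k ≤ n`). -/
noncomputable def content {ℓ n : ℕ} (κ : ℕ → ℤ) (T : StdTableau ℓ n) (k : ℕ) : ℤ :=
  κ (T.node k).1 + ((T.node k).2.2 : ℤ) - ((T.node k).2.1 : ℤ)

/-- The residue sequence of a standard tableau, in `I^n` with `I = ℤ/eℤ`. -/
noncomputable def resSeq {ℓ n : ℕ} (e : ℕ) (κ : ℕ → ℤ) (T : StdTableau ℓ n) :
    Fin n → ZMod e :=
  fun k => ((content κ T (k.1 + 1) : ℤ) : ZMod e)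

/-- The residue of a node. -/
def resNode (e : ℕ) (κ : ℕ → ℤ) (A : Node) : ZMod e :=
  ((κ A.1 + (A.2.2 : ℤ) - (A.2.1 : ℤ) : ℤ) : ZMod e)

/-- A set of nodes is the diagram of a multipartition (with at most `ℓ` components)
iff it is finite and downward closed in rows and columns. -/
def IsDiagramSet (ℓ : ℕ) (S : Set Node) : Prop :=
  S.Finite ∧ (∀ A ∈ S, A.1 < ℓ) ∧
    (∀ l r c, (l, r, c + 1) ∈ S → (l, r, c) ∈ S) ∧
    (∀ l r c, (l, r + 1, c) ∈ S → (l, r, c) ∈ S)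

/-- `A` is an addable node of the diagram `S`. -/
def Addable (ℓ : ℕ) (S : Set Node) (A : Node) : Prop :=
  A ∉ S ∧ IsDiagramSet ℓ (S ∪ {A})

/-- `A` is a removable node of the diagram `S`. -/
def Removable (ℓ : ℕ) (S : Set Node) (A : Node) : Prop :=
  A ∈ S ∧ IsDiagramSet ℓ (S \ {A})

/-- `d_A(S)`: the number of addable nodes of `S` of the same residue as `A` strictly
below `A`, minus the number of removable ones. -/
noncomputable def dNode (ℓ e : ℕ) (κ : ℕ → ℤ) (S : Set Node) (A : Node) : ℤ :=
  (Set.ncard {B | Addable ℓ S B ∧ resNode e κ B = resNode e κ A ∧ nodeBelow A B} : ℤ) -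
    (Set.ncard {B | Removable ℓ S B ∧ resNode e κ B = resNode e κ A ∧ nodeBelow A B} : ℤ)

/-- The Brundan–Kleshchev–Wang degree `deg_e(T)` of a standard tableau, written as the
telescoping sum of the recursion `deg_e(T) = deg_e(T↓(n-1)) + d_A(Shape(T))`. -/
noncomputable def degE {ℓ n : ℕ} (e : ℕ) (κ : ℕ → ℤ) (T : StdTableau ℓ n) : ℤ :=
  ∑ m ∈ Finset.Icc 1 n,
    dNode ℓ e κ {A | A ∈ T.shape.diagram ∧ T.entry A ≤ m} (T.node m)

/-- The restriction of the diagram of `T` to entries `≤ m` (the diagram of `Shape(T↓m)`). -/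
def restDiag {ℓ n : ℕ} (T : StdTableau ℓ n) (m : ℕ) : Set Node :=
  {A | A ∈ T.shape.diagram ∧ T.entry A ≤ m}

/-- Dominance order on standard tableaux: `domTab S T` iff `S ⊵ T`. -/
def domTab {ℓ n : ℕ} (S T : StdTableau ℓ n) : Prop :=
  ∀ m l i : ℕ,
    Set.ncard {A | A ∈ restDiag T m ∧ (A.1 < l ∨ (A.1 = l ∧ A.2.1 ≤ i))} ≤
      Set.ncard {A | A ∈ restDiag S m ∧ (A.1 < l ∨ (A.1 = l ∧ A.2.1 ≤ i))}

/-- Interchange the entries `r` and `r + 1` in an entry function. -/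
def swapEntry (f : Node → ℕ) (r : ℕ) : Node → ℕ :=
  fun A => if f A = r then r + 1 else if f A = r + 1 then r else f A

/-- `ρ_r(T) = c_r(T) - c_{r+1}(T)`, the axial distance. -/
noncomputable def rhoTab {ℓ n : ℕ} (κ : ℕ → ℤ) (T : StdTableau ℓ n) (r : ℕ) : ℤ :=
  content κ T r - content κ T (r + 1)

/-- The entry function of the row-reading initial tableau `t^λ`. -/
noncomputable def tlamEntry {ℓ n : ℕ} (μ : Multipartition ℓ n) (A : Node) : ℕ :=
  if A ∈ μ.diagram then
    (∑ l ∈ Finset.range A.1, ∑ r ∈ Finset.range n, μ.part l r) +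
      (∑ r ∈ Finset.range A.2.1, μ.part A.1 r) + A.2.2 + 1
  else 0

/-- The finite set of possible contents of standard tableaux of size `n`. -/
noncomputable def contFinset (ℓ n : ℕ) (κ : ℕ → ℤ) : Finset ℤ :=
  ((Finset.range ℓ ×ˢ Finset.range n ×ˢ Finset.range n).image
      (fun x => κ x.1 + (x.2.2 : ℤ) - (x.2.1 : ℤ))).filter
    (fun c => ∃ T : StdTableau ℓ n, ∃ k, 1 ≤ k ∧ k ≤ n ∧ content κ T k = c)

/-- The standard tableau (if any) obtained from `T` by interchanging the entries
`r` and `r + 1`; i.e. `T·s_r` if it is standard, and `none` otherwise. -/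
noncomputable def oSwapO {ℓ n : ℕ} (T : StdTableau ℓ n) (r : ℕ) :
    Option (StdTableau ℓ n) :=
  if h : ∃ V : StdTableau ℓ n, V.entry = swapEntry T.entry r then some (Classical.choose h)
  else none

/-- `oSwap` extended to `Option`. -/
noncomputable def oSwap {ℓ n : ℕ} (X : Option (StdTableau ℓ n)) (r : ℕ) :
    Option (StdTableau ℓ n) :=
  X.bind fun T => oSwapO T r

/-- Evaluate a seminormal coefficient system on an optional tableau (by `0` if none). -/
noncomputable def aE {ℓ n : ℕ} {K : Type*} [Field K] (α : ℕ → StdTableau ℓ n → K) (r : ℕ)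
    (X : Option (StdTableau ℓ n)) : K :=
  X.elim 0 (α r)

/-! ## Separation and idempotent subrings -/

/-- `(K, t)` separates `Std(P_n)` (field version):
`[n]!_t ∏_{1 ≤ l < m ≤ ℓ} ∏_{-n < d < n} [κ_l - κ_m + d]_t ≠ 0`. -/
def SeparatesF {K : Type*} [Field K] (t : Kˣ) (n ℓ : ℕ) (κ : ℕ → ℤ) : Prop :=
  ((∏ d ∈ Finset.Icc 1 n, qint (t : K) (d : ℤ)) *
      ∏ l ∈ Finset.range ℓ, ∏ m ∈ Finset.Ioo l ℓ,
        ∏ d ∈ Finset.Ioo (-(n : ℤ)) (n : ℤ), qint (t : K) (κ l - κ m + d)) ≠ 0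

/-- `(O, t)` separates `Std(P_n)` (subring version): the separation element is a unit. -/
def SeparatesU {O : Type*} [CommRing O] (t : Oˣ) (n ℓ : ℕ) (κ : ℕ → ℤ) : Prop :=
  IsUnit ((∏ d ∈ Finset.Icc 1 n, qintU t (d : ℤ)) *
      ∏ l ∈ Finset.range ℓ, ∏ m ∈ Finset.Ioo l ℓ,
        ∏ d ∈ Finset.Ioo (-(n : ℤ)) (n : ℤ), qintU t (κ l - κ m + d))

/-- `(O, t)` is an `e`-idempotent subring of the field `K`. -/
def IsIdempotentSubring {K : Type*} [Field K] (O : Subring K) (t : Oˣ) (e n ℓ : ℕ)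
    (κ : ℕ → ℤ) : Prop :=
  SeparatesU t n ℓ κ ∧
    (∀ k : ℤ, ¬(e : ℤ) ∣ k → IsUnit (qintU t k)) ∧
    (∀ k : ℤ, (e : ℤ) ∣ k → qintU t k ∈ Ideal.jacobson (⊥ : Ideal O))

/-! ## The cyclotomic Hecke algebra, by generators and relations -/

/-- Generators `L_1, …, L_n`, `T_1, …, T_{n-1}` (here `0`-based). -/
inductive HeckeGen (n : ℕ) : Type
  | L : Fin n → HeckeGen n
  | T : Fin (n - 1) → HeckeGen n

/-- The position `r` of the pair `(r, r+1)` interchanged by the `r`-th transposition. -/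
def pL {n : ℕ} (r : Fin (n - 1)) : Fin n := ⟨r.1, by have := r.2; omega⟩

/-- The position `r + 1` of the pair interchanged by the `r`-th transposition. -/
def pR {n : ℕ} (r : Fin (n - 1)) : Fin n := ⟨r.1 + 1, by have := r.2; omega⟩

/-- The position `r + 2`, used in braid relations. -/
def pM {n : ℕ} (r : Fin (n - 1)) (hr : r.1 + 1 < n - 1) : Fin n := ⟨r.1 + 2, by omega⟩

/-- The free algebra generator `L_k`. -/
def hL (R : Type*) [CommRing R] {n : ℕ} (k : Fin n) : FreeAlgebra R (HeckeGen n) :=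
  FreeAlgebra.ι R (HeckeGen.L k)

/-- The free algebra generator `T_r`. -/
def hT (R : Type*) [CommRing R] {n : ℕ} (r : Fin (n - 1)) : FreeAlgebra R (HeckeGen n) :=
  FreeAlgebra.ι R (HeckeGen.T r)

/-- The defining relations of the integral cyclotomic Hecke algebra `H_n(R, t, κ)`. -/
inductive HeckeRel (R : Type*) [CommRing R] (t : Rˣ) (n ℓ : ℕ) (κ : ℕ → ℤ) :
    FreeAlgebra R (HeckeGen n) → FreeAlgebra R (HeckeGen n) → Prop
  | cyc (h : 0 < n) :
      HeckeRel R t n ℓ κ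
        (((List.range ℓ).map fun l =>
          hL R (⟨0, h⟩ : Fin n) - algebraMap R _ (qintU t (κ l))).prod) 0
  | quad (r : Fin (n - 1)) :
      HeckeRel R t n ℓ κ ((hT R r + 1) * (hT R r - algebraMap R _ (t : R))) 0
  | LL (k m : Fin n) : HeckeRel R t n ℓ κ (hL R k * hL R m) (hL R m * hL R k)
  | TTfar (r s : Fin (n - 1)) (h : r.1 + 1 < s.1 ∨ s.1 + 1 < r.1) :
      HeckeRel R t n ℓ κ (hT R r * hT R s) (hT R s * hT R r)
  | braid (r s : Fin (n - 1)) (h : s.1 = r.1 + 1) :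
      HeckeRel R t n ℓ κ (hT R r * hT R s * hT R r) (hT R s * hT R r * hT R s)
  | TL (r : Fin (n - 1)) (k : Fin n) (h : k.1 ≠ r.1 ∧ k.1 ≠ r.1 + 1) :
      HeckeRel R t n ℓ κ (hT R r * hL R k) (hL R k * hT R r)
  | LT (r : Fin (n - 1)) :
      HeckeRel R t n ℓ κ (hL R (pR r) * (hT R r - algebraMap R _ (t : R) + 1))
        (hT R r * hL R (pL r) + 1)

/-- The integral cyclotomic Hecke algebra of type `A`, `H_n(R, t, κ)`. -/
noncomputable abbrev CycHecke (R : Type*) [CommRing R] (t : Rˣ) (n ℓ : ℕ) (κ : ℕ → ℤ) :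
    Type _ :=
  RingQuot (HeckeRel R t n ℓ κ)

/-- The generator `L_k` of the cyclotomic Hecke algebra. -/
noncomputable def Lgen (R : Type*) [CommRing R] (t : Rˣ) (n ℓ : ℕ) (κ : ℕ → ℤ)
    (k : Fin n) : CycHecke R t n ℓ κ :=
  RingQuot.mkAlgHom R (HeckeRel R t n ℓ κ) (hL R k)

/-- The generator `T_r` of the cyclotomic Hecke algebra. -/
noncomputable def Tgen (R : Type*) [CommRing R] (t : Rˣ) (n ℓ : ℕ) (κ : ℕ → ℤ)
    (r : Fin (n - 1)) : CycHecke R t n ℓ κ :=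
  RingQuot.mkAlgHom R (HeckeRel R t n ℓ κ) (hT R r)

end Paper
/-! ## Quiver Hecke (KLR) algebras, by generators and relations -/

namespace Paper

/-- Generators `e(i)` (`i ∈ I^n`), `ψ_1, …, ψ_{n-1}`, `y_1, …, y_n` (here `0`-based). -/
inductive KLRGen (n e : ℕ) : Type
  | idem : (Fin n → ZMod e) → KLRGen n e
  | psi : Fin (n - 1) → KLRGen n e
  | y : Fin n → KLRGen n e

/-- The free algebra generator `e(i)`. -/
def kE (R : Type*) [CommRing R] {n e : ℕ} (i : Fin n → ZMod e) :
    FreeAlgebra R (KLRGen n e) :=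
  FreeAlgebra.ι R (KLRGen.idem i)

/-- The free algebra generator `ψ_r`. -/
def kPsi (R : Type*) [CommRing R] {n e : ℕ} (r : Fin (n - 1)) :
    FreeAlgebra R (KLRGen n e) :=
  FreeAlgebra.ι R (KLRGen.psi r)

/-- The free algebra generator `y_k`. -/
def kY (R : Type*) [CommRing R] {n e : ℕ} (k : Fin n) : FreeAlgebra R (KLRGen n e) :=
  FreeAlgebra.ι R (KLRGen.y k)

/-- `s_r · i`: interchange the entries of `i` at positions `r` and `r + 1`. -/
def swapSeq {n e : ℕ} (i : Fin n → ZMod e) (r : Fin (n - 1)) : Fin n → ZMod e :=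
  fun k => if k = pL r then i (pR r) else if k = pR r then i (pL r) else i k

/-- The defining relations of the cyclotomic quiver Hecke algebra `R_n^Λ(R)` where
`Λ = Σ_l Λ_{κ_l mod e}`. -/
inductive KLRRel (R : Type*) [CommRing R] (n e ℓ : ℕ) [NeZero e] (κ : ℕ → ℤ) :
    FreeAlgebra R (KLRGen n e) → FreeAlgebra R (KLRGen n e) → Prop
  | cyc (h : 0 < n) (i : Fin n → ZMod e) :
      KLRRel R n e ℓ κ
        ((kY R (⟨0, h⟩ : Fin n)) ^
            (((Finset.range ℓ).filter fun l => ((κ l : ZMod e) = i ⟨0, h⟩)).card) *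
          kE R i) 0
  | orth (i j : Fin n → ZMod e) (h : i ≠ j) : KLRRel R n e ℓ κ (kE R i * kE R j) 0
  | idem (i : Fin n → ZMod e) : KLRRel R n e ℓ κ (kE R i * kE R i) (kE R i)
  | complete : KLRRel R n e ℓ κ (∑ i : Fin n → ZMod e, kE R i) 1
  | yE (k : Fin n) (i : Fin n → ZMod e) :
      KLRRel R n e ℓ κ (kY R k * kE R i) (kE R i * kY R k)
  | psiE (r : Fin (n - 1)) (i : Fin n → ZMod e) :
      KLRRel R n e ℓ κ (kPsi R r * kE R i) (kE R (swapSeq i r) * kPsi R r)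
  | yy (k m : Fin n) : KLRRel R n e ℓ κ (kY R k * kY R m) (kY R m * kY R k)
  | psiyEq (r : Fin (n - 1)) (i : Fin n → ZMod e) (h : i (pL r) = i (pR r)) :
      KLRRel R n e ℓ κ (kPsi R r * kY R (pR r) * kE R i)
        ((kY R (pL r) * kPsi R r + 1) * kE R i)
  | psiyNe (r : Fin (n - 1)) (i : Fin n → ZMod e) (h : i (pL r) ≠ i (pR r)) :
      KLRRel R n e ℓ κ (kPsi R r * kY R (pR r) * kE R i)
        (kY R (pL r) * kPsi R r * kE R i)
  | ypsiEq (r : Fin (n - 1)) (i : Fin n → ZMod e) (h : i (pL r) = i (pR r)) :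
      KLRRel R n e ℓ κ (kY R (pR r) * kPsi R r * kE R i)
        ((kPsi R r * kY R (pL r) + 1) * kE R i)
  | ypsiNe (r : Fin (n - 1)) (i : Fin n → ZMod e) (h : i (pL r) ≠ i (pR r)) :
      KLRRel R n e ℓ κ (kY R (pR r) * kPsi R r * kE R i)
        (kPsi R r * kY R (pL r) * kE R i)
  | psiyFar (r : Fin (n - 1)) (k : Fin n) (h : k.1 ≠ r.1 ∧ k.1 ≠ r.1 + 1) :
      KLRRel R n e ℓ κ (kPsi R r * kY R k) (kY R k * kPsi R r)
  | psipsiFar (r s : Fin (n - 1)) (h : r.1 + 1 < s.1 ∨ s.1 + 1 < r.1) :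
      KLRRel R n e ℓ κ (kPsi R r * kPsi R s) (kPsi R s * kPsi R r)
  | quadEq (r : Fin (n - 1)) (i : Fin n → ZMod e) (h : i (pL r) = i (pR r)) :
      KLRRel R n e ℓ κ (kPsi R r ^ 2 * kE R i) 0
  | quadR (r : Fin (n - 1)) (i : Fin n → ZMod e)
      (h1 : i (pR r) = i (pL r) + 1) (h2 : i (pL r) ≠ i (pR r) + 1) :
      KLRRel R n e ℓ κ (kPsi R r ^ 2 * kE R i) ((kY R (pL r) - kY R (pR r)) * kE R i)
  | quadL (r : Fin (n - 1)) (i : Fin n → ZMod e)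
      (h1 : i (pL r) = i (pR r) + 1) (h2 : i (pR r) ≠ i (pL r) + 1) :
      KLRRel R n e ℓ κ (kPsi R r ^ 2 * kE R i) ((kY R (pR r) - kY R (pL r)) * kE R i)
  | quadBoth (r : Fin (n - 1)) (i : Fin n → ZMod e)
      (h1 : i (pR r) = i (pL r) + 1) (h2 : i (pL r) = i (pR r) + 1) :
      KLRRel R n e ℓ κ (kPsi R r ^ 2 * kE R i)
        ((kY R (pR r) - kY R (pL r)) * (kY R (pL r) - kY R (pR r)) * kE R i)
  | quadNone (r : Fin (n - 1)) (i : Fin n → ZMod e) (h1 : i (pL r) ≠ i (pR r))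
      (h2 : i (pR r) ≠ i (pL r) + 1) (h3 : i (pL r) ≠ i (pR r) + 1) :
      KLRRel R n e ℓ κ (kPsi R r ^ 2 * kE R i) (kE R i)
  | braidR (r : Fin (n - 1)) (hr : r.1 + 1 < n - 1) (i : Fin n → ZMod e)
      (h0 : i (pM r hr) = i (pL r)) (h1 : i (pR r) = i (pL r) + 1)
      (h2 : i (pL r) ≠ i (pR r) + 1) :
      KLRRel R n e ℓ κ (kPsi R r * kPsi R ⟨r.1 + 1, hr⟩ * kPsi R r * kE R i)
        ((kPsi R ⟨r.1 + 1, hr⟩ * kPsi R r * kPsi R ⟨r.1 + 1, hr⟩ - 1) * kE R i)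
  | braidL (r : Fin (n - 1)) (hr : r.1 + 1 < n - 1) (i : Fin n → ZMod e)
      (h0 : i (pM r hr) = i (pL r)) (h1 : i (pL r) = i (pR r) + 1)
      (h2 : i (pR r) ≠ i (pL r) + 1) :
      KLRRel R n e ℓ κ (kPsi R r * kPsi R ⟨r.1 + 1, hr⟩ * kPsi R r * kE R i)
        ((kPsi R ⟨r.1 + 1, hr⟩ * kPsi R r * kPsi R ⟨r.1 + 1, hr⟩ + 1) * kE R i)
  | braidBoth (r : Fin (n - 1)) (hr : r.1 + 1 < n - 1) (i : Fin n → ZMod e)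
      (h0 : i (pM r hr) = i (pL r)) (h1 : i (pR r) = i (pL r) + 1)
      (h2 : i (pL r) = i (pR r) + 1) :
      KLRRel R n e ℓ κ (kPsi R r * kPsi R ⟨r.1 + 1, hr⟩ * kPsi R r * kE R i)
        ((kPsi R ⟨r.1 + 1, hr⟩ * kPsi R r * kPsi R ⟨r.1 + 1, hr⟩ +
            kY R (pL r) - 2 * kY R (pR r) + kY R (pM r hr)) * kE R i)
  | braidNone (r : Fin (n - 1)) (hr : r.1 + 1 < n - 1) (i : Fin n → ZMod e)
      (h : ¬(i (pM r hr) = i (pL r) ∧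
        (i (pR r) = i (pL r) + 1 ∨ i (pL r) = i (pR r) + 1))) :
      KLRRel R n e ℓ κ (kPsi R r * kPsi R ⟨r.1 + 1, hr⟩ * kPsi R r * kE R i)
        (kPsi R ⟨r.1 + 1, hr⟩ * kPsi R r * kPsi R ⟨r.1 + 1, hr⟩ * kE R i)

/-- The cyclotomic quiver Hecke algebra `R_n^Λ(R)`, `Λ = Σ_l Λ_{κ_l mod e}`. -/
noncomputable abbrev KLR (R : Type*) [CommRing R] (n e ℓ : ℕ) [NeZero e] (κ : ℕ → ℤ) :
    Type _ :=
  RingQuot (KLRRel R n e ℓ κ)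

/-- The generator `e(i)` of the cyclotomic quiver Hecke algebra. -/
noncomputable def KeGen (R : Type*) [CommRing R] (n e ℓ : ℕ) [NeZero e] (κ : ℕ → ℤ)
    (i : Fin n → ZMod e) : KLR R n e ℓ κ :=
  RingQuot.mkAlgHom R (KLRRel R n e ℓ κ) (kE R i)

/-- The generator `ψ_r` of the cyclotomic quiver Hecke algebra. -/
noncomputable def KpsiGen (R : Type*) [CommRing R] (n e ℓ : ℕ) [NeZero e] (κ : ℕ → ℤ)
    (r : Fin (n - 1)) : KLR R n e ℓ κ :=
  RingQuot.mkAlgHom R (KLRRel R n e ℓ κ) (kPsi R r)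

/-- The generator `y_k` of the cyclotomic quiver Hecke algebra. -/
noncomputable def KyGen (R : Type*) [CommRing R] (n e ℓ : ℕ) [NeZero e] (κ : ℕ → ℤ)
    (k : Fin n) : KLR R n e ℓ κ :=
  RingQuot.mkAlgHom R (KLRRel R n e ℓ κ) (kY R k)

end Paper
/-! ## The deformed cyclotomic quiver Hecke algebra -/

namespace Paper

/-- `y_k^⟨d⟩ = t^d y_k + [d]_t` in the free algebra. -/
def ydot (R : Type*) [CommRing R] (t : Rˣ) {n e : ℕ} (d : ℤ) (k : Fin n) :
    FreeAlgebra R (KLRGen n e) :=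
  algebraMap R _ ((t ^ d : Rˣ) : R) * kY R k + algebraMap R _ (qintU t d)

/-- `ρ_r(i) = î_r - î_{r+1}` for `i ∈ I^n`. -/
def rhoI {n e : ℕ} (i : Fin n → ZMod e) (r : Fin (n - 1)) : ℤ :=
  ((i (pL r)).val : ℤ) - ((i (pR r)).val : ℤ)

/-- The defining relations of the deformed cyclotomic quiver Hecke algebra `R_n(O)`. -/
inductive DefKLRRel (R : Type*) [CommRing R] (t : Rˣ) (n e ℓ : ℕ) [NeZero e] (κ : ℕ → ℤ) :
    FreeAlgebra R (KLRGen n e) → FreeAlgebra R (KLRGen n e) → Prop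
  | cyc (h : 0 < n) (i : Fin n → ZMod e) :
      DefKLRRel R t n e ℓ κ
        ((((List.range ℓ).map fun l =>
            if ((κ l : ZMod e) = i ⟨0, h⟩) then
              kY R (⟨0, h⟩ : Fin n) -
                algebraMap R _ (qintU t (κ l - ((i ⟨0, h⟩).val : ℤ)))
            else 1).prod) * kE R i) 0
  | orth (i j : Fin n → ZMod e) (h : i ≠ j) : DefKLRRel R t n e ℓ κ (kE R i * kE R j) 0
  | idem (i : Fin n → ZMod e) : DefKLRRel R t n e ℓ κ (kE R i * kE R i) (kE R i)
  | complete : DefKLRRel R t n e ℓ κ (∑ i : Fin n → ZMod e, kE R i) 1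
  | yE (k : Fin n) (i : Fin n → ZMod e) :
      DefKLRRel R t n e ℓ κ (kY R k * kE R i) (kE R i * kY R k)
  | psiE (r : Fin (n - 1)) (i : Fin n → ZMod e) :
      DefKLRRel R t n e ℓ κ (kPsi R r * kE R i) (kE R (swapSeq i r) * kPsi R r)
  | yy (k m : Fin n) : DefKLRRel R t n e ℓ κ (kY R k * kY R m) (kY R m * kY R k)
  | psiyEq (r : Fin (n - 1)) (i : Fin n → ZMod e) (h : i (pL r) = i (pR r)) :
      DefKLRRel R t n e ℓ κ (kPsi R r * kY R (pR r) * kE R i)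
        ((kY R (pL r) * kPsi R r + 1) * kE R i)
  | psiyNe (r : Fin (n - 1)) (i : Fin n → ZMod e) (h : i (pL r) ≠ i (pR r)) :
      DefKLRRel R t n e ℓ κ (kPsi R r * kY R (pR r) * kE R i)
        (kY R (pL r) * kPsi R r * kE R i)
  | ypsiEq (r : Fin (n - 1)) (i : Fin n → ZMod e) (h : i (pL r) = i (pR r)) :
      DefKLRRel R t n e ℓ κ (kY R (pR r) * kPsi R r * kE R i)
        ((kPsi R r * kY R (pL r) + 1) * kE R i)
  | ypsiNe (r : Fin (n - 1)) (i : Fin n → ZMod e) (h : i (pL r) ≠ i (pR r)) :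
      DefKLRRel R t n e ℓ κ (kY R (pR r) * kPsi R r * kE R i)
        (kPsi R r * kY R (pL r) * kE R i)
  | psiyFar (r : Fin (n - 1)) (k : Fin n) (h : k.1 ≠ r.1 ∧ k.1 ≠ r.1 + 1) :
      DefKLRRel R t n e ℓ κ (kPsi R r * kY R k) (kY R k * kPsi R r)
  | psipsiFar (r s : Fin (n - 1)) (h : r.1 + 1 < s.1 ∨ s.1 + 1 < r.1) :
      DefKLRRel R t n e ℓ κ (kPsi R r * kPsi R s) (kPsi R s * kPsi R r)
  | quadEq (r : Fin (n - 1)) (i : Fin n → ZMod e) (h : i (pL r) = i (pR r)) :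
      DefKLRRel R t n e ℓ κ (kPsi R r ^ 2 * kE R i) 0
  | quadR (r : Fin (n - 1)) (i : Fin n → ZMod e)
      (h1 : i (pR r) = i (pL r) + 1) (h2 : i (pL r) ≠ i (pR r) + 1) :
      DefKLRRel R t n e ℓ κ (kPsi R r ^ 2 * kE R i)
        ((ydot R t (1 + rhoI i r) (pL r) - kY R (pR r)) * kE R i)
  | quadL (r : Fin (n - 1)) (i : Fin n → ZMod e)
      (h1 : i (pL r) = i (pR r) + 1) (h2 : i (pR r) ≠ i (pL r) + 1) :
      DefKLRRel R t n e ℓ κ (kPsi R r ^ 2 * kE R i)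
        ((ydot R t (1 - rhoI i r) (pR r) - kY R (pL r)) * kE R i)
  | quadBoth (r : Fin (n - 1)) (i : Fin n → ZMod e)
      (h1 : i (pR r) = i (pL r) + 1) (h2 : i (pL r) = i (pR r) + 1) :
      DefKLRRel R t n e ℓ κ (kPsi R r ^ 2 * kE R i)
        ((ydot R t (1 + rhoI i r) (pL r) - kY R (pR r)) *
          (ydot R t (1 - rhoI i r) (pR r) - kY R (pL r)) * kE R i)
  | quadNone (r : Fin (n - 1)) (i : Fin n → ZMod e) (h1 : i (pL r) ≠ i (pR r))
      (h2 : i (pR r) ≠ i (pL r) + 1) (h3 : i (pL r) ≠ i (pR r) + 1) :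
      DefKLRRel R t n e ℓ κ (kPsi R r ^ 2 * kE R i) (kE R i)
  | braidBoth (r : Fin (n - 1)) (hr : r.1 + 1 < n - 1) (i : Fin n → ZMod e)
      (h0 : i (pM r hr) = i (pL r)) (h1 : i (pR r) = i (pL r) + 1)
      (h2 : i (pL r) = i (pR r) + 1) :
      DefKLRRel R t n e ℓ κ
        ((kPsi R r * kPsi R ⟨r.1 + 1, hr⟩ * kPsi R r -
            kPsi R ⟨r.1 + 1, hr⟩ * kPsi R r * kPsi R ⟨r.1 + 1, hr⟩) * kE R i)
        ((ydot R t (1 + rhoI i r) (pL r) + ydot R t (1 + rhoI i r) (pM r hr) -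
            ydot R t (1 + rhoI i r) (pR r) - ydot R t (1 - rhoI i r) (pR r)) * kE R i)
  | braidR (r : Fin (n - 1)) (hr : r.1 + 1 < n - 1) (i : Fin n → ZMod e)
      (h0 : i (pM r hr) = i (pL r)) (h1 : i (pR r) = i (pL r) + 1)
      (h2 : i (pL r) ≠ i (pR r) + 1) :
      DefKLRRel R t n e ℓ κ
        ((kPsi R r * kPsi R ⟨r.1 + 1, hr⟩ * kPsi R r -
            kPsi R ⟨r.1 + 1, hr⟩ * kPsi R r * kPsi R ⟨r.1 + 1, hr⟩) * kE R i)
        (algebraMap R _ (-(((t ^ (1 + rhoI i r) : Rˣ) : R))) * kE R i)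
  | braidL (r : Fin (n - 1)) (hr : r.1 + 1 < n - 1) (i : Fin n → ZMod e)
      (h0 : i (pM r hr) = i (pL r)) (h1 : i (pL r) = i (pR r) + 1)
      (h2 : i (pR r) ≠ i (pL r) + 1) :
      DefKLRRel R t n e ℓ κ
        ((kPsi R r * kPsi R ⟨r.1 + 1, hr⟩ * kPsi R r -
            kPsi R ⟨r.1 + 1, hr⟩ * kPsi R r * kPsi R ⟨r.1 + 1, hr⟩) * kE R i)
        (kE R i)
  | braidNone (r : Fin (n - 1)) (hr : r.1 + 1 < n - 1) (i : Fin n → ZMod e)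
      (h : ¬(i (pM r hr) = i (pL r) ∧
        (i (pR r) = i (pL r) + 1 ∨ i (pL r) = i (pR r) + 1))) :
      DefKLRRel R t n e ℓ κ
        ((kPsi R r * kPsi R ⟨r.1 + 1, hr⟩ * kPsi R r -
            kPsi R ⟨r.1 + 1, hr⟩ * kPsi R r * kPsi R ⟨r.1 + 1, hr⟩) * kE R i) 0

/-- The deformed cyclotomic quiver Hecke algebra `R_n(R)`. -/
noncomputable abbrev DefKLR (R : Type*) [CommRing R] (t : Rˣ) (n e ℓ : ℕ) [NeZero e]
    (κ : ℕ → ℤ) : Type _ :=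
  RingQuot (DefKLRRel R t n e ℓ κ)

/-- The generator `f_i` of the deformed cyclotomic quiver Hecke algebra. -/
noncomputable def DfGen (R : Type*) [CommRing R] (t : Rˣ) (n e ℓ : ℕ) [NeZero e]
    (κ : ℕ → ℤ) (i : Fin n → ZMod e) : DefKLR R t n e ℓ κ :=
  RingQuot.mkAlgHom R (DefKLRRel R t n e ℓ κ) (kE R i)

/-- The generator `ψ_r` of the deformed cyclotomic quiver Hecke algebra. -/
noncomputable def DpsiGen (R : Type*) [CommRing R] (t : Rˣ) (n e ℓ : ℕ) [NeZero e]
    (κ : ℕ → ℤ) (r : Fin (n - 1)) : DefKLR R t n e ℓ κ :=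
  RingQuot.mkAlgHom R (DefKLRRel R t n e ℓ κ) (kPsi R r)

/-- The generator `y_k` of the deformed cyclotomic quiver Hecke algebra. -/
noncomputable def DyGen (R : Type*) [CommRing R] (t : Rˣ) (n e ℓ : ℕ) [NeZero e]
    (κ : ℕ → ℤ) (k : Fin n) : DefKLR R t n e ℓ κ :=
  RingQuot.mkAlgHom R (DefKLRRel R t n e ℓ κ) (kY R k)

/-! ## Seminormal idempotents -/

/-- The seminormal idempotent `F_T` of the semisimple cyclotomic Hecke algebra:
`F_T = ∏_{k=1}^n ∏_{c ∈ Cont(n), [c_k(T)] ≠ [c]} (L_k - [c]) / ([c_k(T)] - [c])`. -/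
noncomputable def Fidem (K : Type*) [Field K] (tK : Kˣ) (n ℓ : ℕ) (κ : ℕ → ℤ)
    (T : StdTableau ℓ n) : CycHecke K tK n ℓ κ :=
  ((List.finRange n).map (fun k =>
    (((contFinset ℓ n κ).sort (· ≤ ·)).map (fun c =>
      if qint (tK : K) (content κ T (k.1 + 1)) ≠ qint (tK : K) c then
        (Lgen K tK n ℓ κ k - algebraMap K _ (qint (tK : K) c)) *
          algebraMap K _ ((qint (tK : K) (content κ T (k.1 + 1)) - qint (tK : K) c)⁻¹)
      else 1)).prod)).prod

/-- The residue idempotent `f_i = Σ_{T ∈ Std(i)} F_T`. -/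
noncomputable def fres (K : Type*) [Field K] (tK : Kˣ) (n ℓ e : ℕ) (κ : ℕ → ℤ)
    (i : Fin n → ZMod e) : CycHecke K tK n ℓ κ :=
  ∑ᶠ T : {T : StdTableau ℓ n // resSeq e κ T = i}, Fidem K tK n ℓ κ T.1

/-- The simultaneous two-sided eigenspace `H_{S,T}` of the Jucys–Murphy elements. -/
noncomputable def eigSub (K : Type*) [Field K] (tK : Kˣ) (n ℓ : ℕ) (κ : ℕ → ℤ)
    (S T : StdTableau ℓ n) : Submodule K (CycHecke K tK n ℓ κ) where
  carrier := {h | ∀ k : Fin n,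
      Lgen K tK n ℓ κ k * h = qint (tK : K) (content κ S (k.1 + 1)) • h ∧
      h * Lgen K tK n ℓ κ k = qint (tK : K) (content κ T (k.1 + 1)) • h}
  add_mem' := by
    intro a b ha hb
    intro k
    obtain ⟨h1, h2⟩ := ha k
    obtain ⟨h3, h4⟩ := hb k
    exact ⟨by rw [mul_add, h1, h3, smul_add], by rw [add_mul, h2, h4, smul_add]⟩
  zero_mem' := by intro k; simp
  smul_mem' := by
    intro c a ha
    intro k
    obtain ⟨h1, h2⟩ := ha k
    constructor
    · rw [mul_smul_comm, h1, smul_comm]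
    · rw [smul_mul_assoc, h2, smul_comm]

end Paper

namespace Paper

/-!
The integers `d` with `[d]_t = 0` form a subgroup `Z` of `ℤ` that does not contain `1`, and
`[a]_t = [b]_t` if and only if `a - b ∈ Z`; so only contents modulo `Z` matter.

A standard tableau is a chain of diagrams, each obtained from the previous one by adding a node.
If two tableaux with the same contents modulo `Z` agree up to the entry `m`, their nodes of entry
`m + 1` are addable to a common diagram of size `m < n`. Two distinct nodes addable to it lie
either in one component, with contents differing by some `d` with `1 ≤ |d| ≤ m + 1`, or in
different components `l ≠ l'`, with contents differing by `κ_l - κ_l' + d` with `|d| ≤ m`. Under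
the separation condition neither difference lies in `Z`, so the tableaux agree.

Conversely, every factor of the separation element is, up to sign, the difference of the contents
of two distinct nodes addable to a single row of length `p < n`. Adding both nodes to that row,
in either order, gives two tableaux whose contents agree modulo `Z` once this difference is in `Z`.
-/

section QuantumIntegers

variable {K : Type*} [Field K] {x : K}

lemma qint_zero (x : K) : qint x 0 = 0 := by
  simp [qint]

lemma qint_one (x : K) : qint x 1 = 1 := by
  simp [qint]

lemma qint_natCast (x : K) (m : ℕ) : qint x m = ∑ k ∈ Finset.range m, x ^ k := by
  simp [qint]

lemma qint_neg_natCast (x : K) (m : ℕ) :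
    qint x (-m) = -∑ k ∈ Finset.range m, x ^ (-((k : ℤ) + 1)) := by
  cases m with
  | zero => simp [qint]
  | succ m => rw [qint, if_neg (by lia), neg_neg, Int.toNat_natCast]

lemma qint_add_one (x : K) (a : ℤ) : qint x (a + 1) = qint x a + x ^ a := by
  obtain ⟨m, rfl⟩ | ⟨m, rfl⟩ : (∃ m : ℕ, a = m) ∨ ∃ m : ℕ, a = -(m + 1 : ℕ) := by
    rcases le_or_gt 0 a with ha | ha
    · exact .inl ⟨a.toNat, by lia⟩
    · exact .inr ⟨(-a - 1).toNat, by lia⟩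
  · rw [← Nat.cast_succ, qint_natCast, qint_natCast, Finset.sum_range_succ, zpow_natCast]
  · rw [show -((m + 1 : ℕ) : ℤ) + 1 = -(m : ℤ) by push_cast; ring, qint_neg_natCast,
      qint_neg_natCast, Finset.sum_range_succ, Nat.cast_succ, neg_add, neg_add_cancel_right]

lemma qint_add (hx : x ≠ 0) (a b : ℤ) : qint x (a + b) = qint x a + x ^ a * qint x b := by
  induction b using Int.induction_on with
  | zero => simp [qint_zero]
  | succ i ih =>
    rw [← add_assoc, qint_add_one x, qint_add_one x, ih, zpow_add₀ hx]
    ring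
  | pred i ih =>
    have hab := qint_add_one x (a + (-i - 1))
    have hb := qint_add_one x (-i - 1)
    rw [show a + (-(i : ℤ) - 1) + 1 = a + -i by ring, ih, zpow_add₀ hx] at hab
    rw [sub_add_cancel] at hb
    linear_combination x ^ a * hb - hab

/-- The subgroup of integers `d` with `[d]_t = 0`; a generator of it is the quantum
characteristic of `t`. -/
def qintZeros (t : Kˣ) : AddSubgroup ℤ where
  carrier := {d | qint (t : K) d = 0}
  zero_mem' := qint_zero _
  add_mem' {a b} ha hb := by
    rw [Set.mem_ofPred_eq] at *
    rw [qint_add t.ne_zero, ha, hb, mul_zero, add_zero]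
  neg_mem' {a} ha := by
    have h := qint_add t.ne_zero a (-a)
    rw [Set.mem_ofPred_eq] at *
    simpa [ha, qint_zero, zpow_ne_zero] using h

lemma mem_qintZeros {t : Kˣ} {d : ℤ} : d ∈ qintZeros t ↔ qint (t : K) d = 0 := Iff.rfl

lemma one_notMem_qintZeros (t : Kˣ) : 1 ∉ qintZeros t := by
  simp [mem_qintZeros, qint_one]

lemma qint_eq_qint_iff (t : Kˣ) (a b : ℤ) :
    qint (t : K) a = qint (t : K) b ↔ a - b ∈ qintZeros t := by
  rw [← add_sub_cancel b a, qint_add t.ne_zero]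
  simp [mem_qintZeros, zpow_ne_zero]

end QuantumIntegers

/-- The separation condition modulo a subgroup `Z` of `ℤ`: none of the integers `d` whose quantum
integers are the factors of the separation element of `SeparatesF` lies in `Z`. -/
def SeparatesMod (Z : AddSubgroup ℤ) (n ℓ : ℕ) (κ : ℕ → ℤ) : Prop :=
  (∀ d ∈ Finset.Icc 1 n, (d : ℤ) ∉ Z) ∧
    ∀ l ∈ Finset.range ℓ, ∀ m ∈ Finset.Ioo l ℓ, ∀ d ∈ Finset.Ioo (-(n : ℤ)) (n : ℤ),
      κ l - κ m + d ∉ Z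

lemma separatesF_iff_separatesMod {K : Type*} [Field K] (t : Kˣ) (n ℓ : ℕ) (κ : ℕ → ℤ) :
    SeparatesF t n ℓ κ ↔ SeparatesMod (qintZeros t) n ℓ κ := by
  simp only [SeparatesF, SeparatesMod, mul_ne_zero_iff, Finset.prod_ne_zero_iff, mem_qintZeros,
    ne_eq]

variable {ℓ n : ℕ} {κ : ℕ → ℤ} {Z : AddSubgroup ℤ}

lemma SeparatesMod.sub_add_notMem (hZ : SeparatesMod Z n ℓ κ) {l m : ℕ} (hl : l < ℓ) (hm : m < ℓ)
    (hlm : l ≠ m) {d : ℤ} (hd : |d| < n) : κ l - κ m + d ∉ Z := by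
  rw [abs_lt] at hd
  rcases hlm.lt_or_gt with h | h
  · exact hZ.2 l (Finset.mem_range.2 hl) m (Finset.mem_Ioo.2 ⟨h, hm⟩) d (Finset.mem_Ioo.2 hd)
  · have hneg := hZ.2 m (Finset.mem_range.2 hm) l (Finset.mem_Ioo.2 ⟨h, hl⟩) (-d)
      (Finset.mem_Ioo.2 ⟨by lia, by lia⟩)
    rwa [← neg_mem_iff, show -(κ l - κ m + d) = κ m - κ l + -d by ring]

/-! ### Diagrams and addable nodes -/

section Diagrams

variable {D : Set Node}

lemma IsDiagramSet.mem_of_le (hD : IsDiagramSet ℓ D) {l r c r' c' : ℕ} (h : (l, r, c) ∈ D)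
    (hr : r' ≤ r) (hc : c' ≤ c) : (l, r', c') ∈ D := by
  have hrow : (l, r, c') ∈ D :=
    Nat.decreasingInduction' (P := fun j => (l, r, j) ∈ D)
      (fun j _ _ => hD.2.2.1 l r j) hc h
  exact Nat.decreasingInduction' (P := fun i => (l, i, c') ∈ D)
    (fun i _ _ => hD.2.2.2 l i c') hr hrow

lemma row_add_col_le_ncard (hD : D.Finite) {l l' c r : ℕ} (hrow : ∀ j < c, (l, 0, j) ∈ D)
    (hcol : ∀ i < r, (l', i, 0) ∈ D) : c + r ≤ D.ncard + if l = l' then 1 else 0 := by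
  set R : Set Node := (fun j => (l, 0, j)) '' Set.Iio c with hR
  set C : Set Node := (fun i => (l', i, 0)) '' Set.Iio r with hC
  have hRcard : R.ncard = c := by
    rw [hR, Set.ncard_image_of_injective _ fun i j h => by simpa using h, Set.ncard_Iio_nat]
  have hCcard : C.ncard = r := by
    rw [hC, Set.ncard_image_of_injective _ fun i j h => by simpa using h, Set.ncard_Iio_nat]
  have hunion : (R ∪ C).ncard ≤ D.ncard := by
    refine Set.ncard_le_ncard (Set.union_subset ?_ ?_) hD
    · rintro _ ⟨j, hj, rfl⟩
      exact hrow j hj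
    · rintro _ ⟨i, hi, rfl⟩
      exact hcol i hi
  have hinter : (R ∩ C).ncard ≤ if l = l' then 1 else 0 := by
    have hcorner : R ∩ C ⊆ if l = l' then {(l, 0, 0)} else ∅ := by
      rintro _ ⟨⟨j, -, rfl⟩, i, -, h⟩
      simp only [Prod.mk.injEq] at h
      obtain ⟨rfl, -, rfl⟩ := h
      simp
    refine (Set.ncard_le_ncard hcorner (by split_ifs <;> simp)).trans_eq ?_
    split_ifs <;> simp
  have hsum := Set.ncard_union_add_ncard_inter R C ((Set.finite_Iio c).image _)
    ((Set.finite_Iio r).image _)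
  lia

lemma Addable.mem_of_le {l r c r' c' : ℕ} (h : Addable ℓ D (l, r, c)) (hr : r' ≤ r)
    (hc : c' ≤ c) (hne : (r', c') ≠ (r, c)) : (l, r', c') ∈ D := by
  have hmem := h.2.mem_of_le (Or.inr rfl : (l, r, c) ∈ D ∪ {(l, r, c)}) hr hc
  exact hmem.resolve_right fun heq => hne (congrArg Prod.snd heq)

lemma Addable.col_add_row_le_ncard {l r c l' r' c' : ℕ} (hA : Addable ℓ D (l, r, c))
    (hB : Addable ℓ D (l', r', c')) : c + r' ≤ D.ncard + if l = l' then 1 else 0 :=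
  row_add_col_le_ncard (hA.2.1.subset Set.subset_union_left)
    (fun j hj => hA.mem_of_le r.zero_le hj.le (by simp [hj.ne]))
    (fun i hi => hB.mem_of_le hi.le c'.zero_le (by simp [hi.ne]))

lemma Addable.lt_or_gt_of_ne {l r c r' c' : ℕ} (hA : Addable ℓ D (l, r, c))
    (hB : Addable ℓ D (l, r', c')) (hne : (r, c) ≠ (r', c')) :
    r < r' ∧ c' < c ∨ r' < r ∧ c < c' := by
  have hAB : ¬(r ≤ r' ∧ c ≤ c') := fun h => hA.1 (hB.mem_of_le h.1 h.2 hne)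
  have hBA : ¬(r' ≤ r ∧ c' ≤ c) := fun h => hB.1 (hA.mem_of_le h.1 h.2 hne.symm)
  lia

/-- The content `κ_l + c - r` of the node `(l, r, c)`. -/
def nodeContent (κ : ℕ → ℤ) (A : Node) : ℤ :=
  κ A.1 + A.2.2 - A.2.1

theorem Addable.eq_of_nodeContent_sub_mem {A B : Node} (hA : Addable ℓ D A) (hB : Addable ℓ D B)
    (hZ : SeparatesMod Z n ℓ κ) (hn : D.ncard < n)
    (h : nodeContent κ A - nodeContent κ B ∈ Z) : A = B := by
  obtain ⟨l, r, c⟩ := A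
  obtain ⟨l', r', c'⟩ := B
  have hAB := hA.col_add_row_le_ncard hB
  have hBA := hB.col_add_row_le_ncard hA
  by_contra hne
  simp only [nodeContent] at h
  by_cases hl : l = l'
  · subst hl
    obtain ⟨d, hd, hdAB⟩ : ∃ d ∈ Finset.Icc 1 n, (d : ℤ) = |(c : ℤ) - r - (c' - r')| := by
      refine ⟨_, ?_, Int.natCast_natAbs _⟩
      have := hA.lt_or_gt_of_ne hB (by simpa using hne)
      grind
    refine hZ.1 d hd ?_
    rw [hdAB, abs_mem_iff]
    convert h using 1
    ring
  · have hlℓ : l < ℓ := hA.2.2.1 _ (Or.inr rfl)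
    have hlℓ' : l' < ℓ := hB.2.2.1 _ (Or.inr rfl)
    rw [if_neg hl] at hAB
    rw [if_neg (Ne.symm hl)] at hBA
    refine hZ.sub_add_notMem hlℓ hlℓ' hl (d := c - r - (c' - r')) (by grind) ?_
    convert h using 1
    ring

/-- The `l`-th component of a diagram, as a Young diagram. -/
noncomputable def IsDiagramSet.component (hD : IsDiagramSet ℓ D) (l : ℕ) : YoungDiagram where
  cells := (hD.1.preimage (f := Prod.mk l) (Prod.mk_right_injective l).injOn).toFinset
  isLowerSet := by
    rintro ⟨r, c⟩ ⟨r', c'⟩ hle hmem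
    simp only [Set.Finite.coe_toFinset, Set.mem_preimage] at hmem ⊢
    exact hD.mem_of_le hmem hle.1 hle.2

lemma IsDiagramSet.lt_rowLen_component (hD : IsDiagramSet ℓ D) {l r c : ℕ} :
    c < (hD.component l).rowLen r ↔ (l, r, c) ∈ D := by
  rw [← YoungDiagram.mem_iff_lt_rowLen, ← YoungDiagram.mem_cells]
  simp [component]

lemma IsDiagramSet.row_lt_ncard (hD : IsDiagramSet ℓ D) {l r c : ℕ} (h : (l, r, c) ∈ D) :
    r < D.ncard := by
  have := row_add_col_le_ncard (l := l) (l' := l) (c := 1) (r := r + 1) hD.1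
    (fun j hj => hD.mem_of_le h r.zero_le (by lia))
    (fun i hi => hD.mem_of_le h (by lia) c.zero_le)
  simp only [if_true] at this
  lia

lemma IsDiagramSet.sum_rowLen_component (hD : IsDiagramSet ℓ D) :
    ∑ l ∈ Finset.range ℓ, ∑ r ∈ Finset.range D.ncard, (hD.component l).rowLen r = D.ncard := by
  have hmaps : ∀ A ∈ hD.1.toFinset, (A.1, A.2.1) ∈ Finset.range ℓ ×ˢ Finset.range D.ncard := by
    rintro ⟨l, r, c⟩ hA
    rw [Set.Finite.mem_toFinset] at hA
    simpa using ⟨hD.2.1 _ hA, hD.row_lt_ncard hA⟩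
  rw [← Finset.sum_product' (f := fun l r => (hD.component l).rowLen r)]
  conv_rhs => rw [Set.ncard_eq_toFinset_card D hD.1, Finset.card_eq_sum_card_fiberwise hmaps]
  refine Finset.sum_congr rfl fun ⟨l, r⟩ _ => ?_
  rw [← Finset.card_range ((hD.component l).rowLen r)]
  refine Finset.card_nbij' (fun c => (l, r, c)) (fun A => A.2.2) ?_ ?_ ?_ ?_
  · intro c hc
    simpa [hD.lt_rowLen_component] using hc
  · rintro ⟨l', r', c⟩ hA
    simp only [Finset.coe_filter, Set.Finite.mem_toFinset, Set.mem_ofPred_eq,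
      Prod.mk.injEq] at hA
    obtain ⟨hA, rfl, rfl⟩ := hA
    simpa [hD.lt_rowLen_component] using hA
  · intro c _
    rfl
  · rintro ⟨l', r', c⟩ hA
    simp only [Finset.coe_filter, Set.mem_ofPred_eq, Prod.mk.injEq] at hA
    simp [hA.2]

lemma IsDiagramSet.exists_multipartition (hD : IsDiagramSet ℓ D) (hn : D.ncard = n) :
    ∃ μ : Multipartition ℓ n, μ.diagram = D := by
  subst hn
  have rowLen_eq_zero {l r : ℕ} (h : (l, r, 0) ∉ D) : (hD.component l).rowLen r = 0 := by
    rwa [← hD.lt_rowLen_component, Nat.pos_iff_ne_zero, not_not] at h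
  refine ⟨⟨fun l r => (hD.component l).rowLen r, ?_, ?_, ?_, hD.sum_rowLen_component⟩, ?_⟩
  · exact fun l hl r => rowLen_eq_zero fun h => (hD.2.1 _ h).not_ge hl
  · exact fun l => (hD.component l).rowLen_anti
  · exact fun l r hr => rowLen_eq_zero fun h => (hD.row_lt_ncard h).not_ge hr
  · ext ⟨l, r, c⟩
    exact hD.lt_rowLen_component

lemma Multipartition.diagram_injective :
    Function.Injective (diagram : Multipartition ℓ n → Set Node) := by
  intro μ ν h
  have hpart : μ.part = ν.part := by
    ext l r
    exact eq_of_forall_lt_iff fun c => Set.ext_iff.1 h (l, r, c)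
  cases μ
  cases ν
  congr

end Diagrams

/-! ### Standard tableaux as chains of diagrams -/

namespace StdTableau

variable (S T : StdTableau ℓ n)

lemma entry_node {k : ℕ} (hk : k ∈ Set.Icc 1 n) : T.entry (T.node k) = k :=
  Function.invFunOn_eq (T.bijOn.surjOn hk)

lemma bijOn_node : Set.BijOn T.node (Set.Icc 1 n) T.shape.diagram :=
  T.bijOn.symm T.bijOn.invOn_invFunOn.symm

variable {S T} in
lemma eq_of_eqOn_node (h : Set.EqOn S.node T.node (Set.Icc 1 n)) : S = T := by
  have hdiagram : S.shape.diagram = T.shape.diagram := by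
    rw [← S.bijOn_node.image_eq, ← T.bijOn_node.image_eq, h.image_eq]
  have hshape := Multipartition.diagram_injective hdiagram
  have hentry : S.entry = T.entry := by
    ext A
    by_cases hA : A ∈ S.shape.diagram
    · obtain ⟨k, hk, rfl⟩ := S.bijOn_node.surjOn hA
      rw [S.entry_node hk, h hk, T.entry_node hk]
    · rw [S.entry_zero A hA, T.entry_zero A (hdiagram ▸ hA)]
  cases S
  cases T
  congr

lemma restDiag_zero : restDiag T 0 = ∅ := by
  refine Set.eq_empty_of_forall_notMem fun A hA => ?_
  have h := (T.bijOn.mapsTo hA.1).1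
  exact absurd hA.2 (by lia)

lemma restDiag_succ {m : ℕ} (hm : m < n) :
    restDiag T (m + 1) = restDiag T m ∪ {T.node (m + 1)} := by
  have hk : m + 1 ∈ Set.Icc 1 n := ⟨by lia, hm⟩
  ext A
  simp only [restDiag, Set.mem_ofPred_eq, Set.union_singleton, Set.mem_insert_iff, Nat.le_succ_iff]
  constructor
  · rintro ⟨hA, hle | heq⟩
    · exact .inr ⟨hA, hle⟩
    · exact .inl (T.bijOn.injOn hA (T.bijOn_node.mapsTo hk) (heq.trans (T.entry_node hk).symm))
  · rintro (rfl | ⟨hA, hle⟩)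
    · exact ⟨T.bijOn_node.mapsTo hk, .inr (T.entry_node hk)⟩
    · exact ⟨hA, .inl hle⟩

lemma isDiagramSet_restDiag (m : ℕ) : IsDiagramSet ℓ (restDiag T m) := by
  have hfinite : T.shape.diagram.Finite := T.bijOn.finite_iff_finite.2 (Set.finite_Icc 1 n)
  refine ⟨hfinite.subset fun A hA => hA.1, ?_, ?_, ?_⟩
  · rintro ⟨l, r, c⟩ ⟨hA, -⟩
    by_contra hl
    have hpart := T.shape.comp_bound l (not_lt.1 hl) r
    simp [Multipartition.diagram, hpart] at hA
  · rintro l r c ⟨hA, hle⟩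
    exact ⟨c.lt_succ_self.trans hA, (T.row_inc l r c hA).le.trans hle⟩
  · rintro l r c ⟨hA, hle⟩
    exact ⟨lt_of_lt_of_le hA (T.shape.antitone l r.le_succ), (T.col_inc l r c hA).le.trans hle⟩

lemma addable_node {m : ℕ} (hm : m < n) : Addable ℓ (restDiag T m) (T.node (m + 1)) := by
  refine ⟨fun h => ?_, T.restDiag_succ hm ▸ T.isDiagramSet_restDiag (m + 1)⟩
  have hle : T.entry (T.node (m + 1)) ≤ m := h.2
  rw [T.entry_node ⟨by lia, hm⟩] at hle
  lia

lemma ncard_restDiag {m : ℕ} (hm : m ≤ n) : (restDiag T m).ncard = m := by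
  induction m with
  | zero => simp [restDiag_zero]
  | succ m ih =>
    rw [T.restDiag_succ hm, Set.union_singleton, Set.ncard_insert_of_notMem
      (T.addable_node hm).1 (T.isDiagramSet_restDiag m).1, ih (by lia)]

variable {S T} in
theorem eq_of_content_sub_mem (hZ : SeparatesMod Z n ℓ κ)
    (h : ∀ k ∈ Finset.Icc 1 n, content κ S k - content κ T k ∈ Z) : S = T := by
  have node_eq {m : ℕ} (hm : m < n) (hrest : restDiag S m = restDiag T m) :
      S.node (m + 1) = T.node (m + 1) :=
    (S.addable_node hm).eq_of_nodeContent_sub_mem (hrest ▸ T.addable_node hm) hZ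
      (by rwa [S.ncard_restDiag hm.le]) (h (m + 1) (Finset.mem_Icc.2 ⟨by lia, hm⟩))
  have restDiag_eq {m : ℕ} (hm : m ≤ n) : restDiag S m = restDiag T m := by
    induction m with
    | zero => rw [restDiag_zero, restDiag_zero]
    | succ m ih =>
      have hrest := ih (by lia)
      rw [S.restDiag_succ hm, T.restDiag_succ hm, hrest, node_eq hm hrest]
  refine eq_of_eqOn_node fun k hk => ?_
  obtain ⟨m, rfl⟩ := Nat.exists_eq_add_of_le' hk.1
  exact node_eq hk.2 (restDiag_eq (Nat.le_of_lt hk.2))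

end StdTableau

/-- A sequence of nodes `f 0, …, f (n - 1)` that builds up a diagram one node at a time. Such
sequences are the standard tableaux of size `n`, `f k` being the node with entry `k + 1`. -/
structure IsGrowthSequence (ℓ n : ℕ) (f : ℕ → Node) : Prop where
  injOn : Set.InjOn f (Set.Iio n)
  comp_lt : ∀ k < n, (f k).1 < ℓ
  left_mem : ∀ k < n, ∀ l r c, f k = (l, r, c + 1) → (l, r, c) ∈ f '' Set.Iio k
  above_mem : ∀ k < n, ∀ l r c, f k = (l, r + 1, c) → (l, r, c) ∈ f '' Set.Iio k

namespace IsGrowthSequence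

variable {f : ℕ → Node}

lemma isDiagramSet (hf : IsGrowthSequence ℓ n f) : IsDiagramSet ℓ (f '' Set.Iio n) := by
  refine ⟨(Set.finite_Iio n).image f, ?_, ?_, ?_⟩
  · rintro _ ⟨k, hk, rfl⟩
    exact hf.comp_lt k hk
  · rintro l r c ⟨k, hk, hfk⟩
    exact Set.image_mono (Set.Iio_subset_Iio (le_of_lt hk)) (hf.left_mem k hk l r c hfk)
  · rintro l r c ⟨k, hk, hfk⟩
    exact Set.image_mono (Set.Iio_subset_Iio (le_of_lt hk)) (hf.above_mem k hk l r c hfk)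

lemma exists_multipartition (hf : IsGrowthSequence ℓ n f) :
    ∃ μ : Multipartition ℓ n, μ.diagram = f '' Set.Iio n :=
  hf.isDiagramSet.exists_multipartition (by rw [hf.injOn.ncard_image, Set.ncard_Iio_nat])

theorem exists_stdTableau (hf : IsGrowthSequence ℓ n f) :
    ∃ T : StdTableau ℓ n, ∀ k < n, T.node (k + 1) = f k := by
  obtain ⟨μ, hμ⟩ := hf.exists_multipartition
  let entry : Node → ℕ := μ.diagram.indicator fun A => Function.invFunOn f (Set.Iio n) A + 1
  have mem_diagram {k : ℕ} (hk : k < n) : f k ∈ μ.diagram := hμ ▸ Set.mem_image_of_mem f hk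
  have entry_apply {k : ℕ} (hk : k < n) : entry (f k) = k + 1 := by
    simp only [entry, Set.indicator_of_mem (mem_diagram hk), hf.injOn.leftInvOn_invFunOn hk]
  have bijOn : Set.BijOn entry μ.diagram (Set.Icc 1 n) := by
    rw [hμ]
    refine ⟨?_, ?_, fun k hk => ?_⟩
    · rintro _ ⟨k, hk, rfl⟩
      rw [entry_apply hk]
      exact ⟨by lia, hk⟩
    · rintro _ ⟨j, hj, rfl⟩ _ ⟨k, hk, rfl⟩ h
      rw [entry_apply hj, entry_apply hk] at h
      rw [Nat.succ_injective h]
    · obtain ⟨j, rfl⟩ := Nat.exists_eq_add_of_le' hk.1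
      exact ⟨f j, Set.mem_image_of_mem f hk.2, entry_apply hk.2⟩
  have entry_lt {k : ℕ} (hk : k < n) {A : Node} (hA : A ∈ f '' Set.Iio k) :
      entry A < entry (f k) := by
    obtain ⟨j, hj, rfl⟩ := hA
    rw [Set.mem_Iio] at hj
    rw [entry_apply hk, entry_apply (hj.trans hk)]
    lia
  refine ⟨⟨μ, entry, fun A hA => Set.indicator_of_notMem hA _, bijOn, ?_, ?_⟩, fun k hk => ?_⟩
  · intro l r c h
    obtain ⟨k, hk, hfk⟩ := hμ ▸ h
    exact hfk ▸ entry_lt hk (hf.left_mem k hk l r c hfk)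
  · intro l r c h
    obtain ⟨k, hk, hfk⟩ := hμ ▸ h
    exact hfk ▸ entry_lt hk (hf.above_mem k hk l r c hfk)
  · refine bijOn.injOn (Function.invFunOn_mem (bijOn.surjOn ⟨by lia, hk⟩)) (mem_diagram hk) ?_
    rw [entry_apply hk]
    exact Function.invFunOn_eq (bijOn.surjOn ⟨by lia, hk⟩)

end IsGrowthSequence

/-! ### Tableaux that differ by one transposition -/

/-- The sequence that fills the first row of component `l` from left to right, except that the
node `B` is put in at step `p`. -/
def rowInsert (l : ℕ) (B : Node) (p k : ℕ) : Node :=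
  if k < p then (l, 0, k) else if k = p then B else (l, 0, k - 1)

/-- `B` can be added to a row of length `p` in component `l`, other than by prolonging that row. -/
def IsSideNode (ℓ l p : ℕ) (B : Node) : Prop :=
  B = (l, 1, 0) ∧ 0 < p ∨ ∃ m < ℓ, m ≠ l ∧ B = (m, 0, 0)

variable {l p : ℕ} {B : Node}

lemma IsSideNode.succ (hB : IsSideNode ℓ l p B) : IsSideNode ℓ l (p + 1) B :=
  hB.imp_left fun h => ⟨h.1, p.succ_pos⟩

lemma IsSideNode.isGrowthSequence_rowInsert (hl : l < ℓ) (hB : IsSideNode ℓ l p B) :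
    IsGrowthSequence ℓ n (rowInsert l B p) where
  injOn i _ j _ h := by
    grind [rowInsert, IsSideNode]
  comp_lt k _ := by
    grind [rowInsert, IsSideNode]
  left_mem k _ l' r c h :=
    ⟨if c < p then c else c + 1, by grind [rowInsert, IsSideNode],
      by grind [rowInsert, IsSideNode]⟩
  above_mem k _ l' r c h :=
    ⟨0, by grind [rowInsert, IsSideNode], by grind [rowInsert, IsSideNode]⟩

lemma nodeContent_rowInsert_sub_mem (h : nodeContent κ (l, 0, p) - nodeContent κ B ∈ Z) (k : ℕ) :
    nodeContent κ (rowInsert l B p k) - nodeContent κ (rowInsert l B (p + 1) k) ∈ Z := by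
  obtain hk | rfl | rfl | hk : k < p ∨ k = p ∨ k = p + 1 ∨ p + 1 < k := by lia
  · simp [rowInsert, hk, hk.trans p.lt_succ_self]
  · simpa [rowInsert] using neg_mem h
  · simpa [rowInsert] using h
  · have hp : rowInsert l B p k = rowInsert l B (p + 1) k := by grind [rowInsert]
    simp [hp]

lemma IsSideNode.nodeContent_sub_notMem (hl : l < ℓ) (hp : p < n) (hB : IsSideNode ℓ l p B)
    (H : ∀ S T : StdTableau ℓ n,
      (∀ k ∈ Finset.Icc 1 n, content κ S k - content κ T k ∈ Z) → S = T) :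
    nodeContent κ (l, 0, p) - nodeContent κ B ∉ Z := by
  intro h
  obtain ⟨S, hS⟩ := (hB.isGrowthSequence_rowInsert (n := n) hl).exists_stdTableau
  obtain ⟨T, hT⟩ := (hB.succ.isGrowthSequence_rowInsert (n := n) hl).exists_stdTableau
  have hST : S = T := by
    refine H S T fun r hr => ?_
    obtain ⟨hr1, hrn⟩ := Finset.mem_Icc.1 hr
    obtain ⟨k, rfl⟩ := Nat.exists_eq_add_of_le' hr1
    change nodeContent κ (S.node (k + 1)) - nodeContent κ (T.node (k + 1)) ∈ Z
    rw [hS k hrn, hT k hrn]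
    exact nodeContent_rowInsert_sub_mem h k
  have hnode : B = (l, 0, p) := by
    have := (hS p hp).symm.trans (hST ▸ hT p hp)
    simpa [rowInsert] using this
  grind [IsSideNode]

theorem separatesMod_of_content_injective (hℓ : 1 ≤ ℓ) (hZ : 1 ∉ Z)
    (H : ∀ S T : StdTableau ℓ n,
      (∀ k ∈ Finset.Icc 1 n, content κ S k - content κ T k ∈ Z) → S = T) :
    SeparatesMod Z n ℓ κ := by
  have row_shift {l m d : ℕ} (hl : l < ℓ) (hm : m < ℓ) (hml : m ≠ l) (hd : d < n) :
      κ l - κ m + d ∉ Z := by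
    have hside : IsSideNode ℓ l d (m, 0, 0) := .inr ⟨m, hm, hml, rfl⟩
    convert hside.nodeContent_sub_notMem hl hd H using 2
    simp only [nodeContent]
    push_cast
    ring
  refine ⟨fun d hd => ?_, fun l hl m hm d hd => ?_⟩
  · obtain ⟨hd1, hdn⟩ := Finset.mem_Icc.1 hd
    obtain ⟨p, rfl⟩ := Nat.exists_eq_add_of_le' hd1
    rcases p.eq_zero_or_pos with rfl | hp
    · simpa using hZ
    · have hside : IsSideNode ℓ 0 p (0, 1, 0) := .inl ⟨rfl, hp⟩
      convert hside.nodeContent_sub_notMem hℓ hdn H using 2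
      simp only [nodeContent]
      push_cast
      ring
  · rw [Finset.mem_range] at hl
    rw [Finset.mem_Ioo] at hm hd
    obtain ⟨e, rfl | rfl⟩ := d.eq_nat_or_neg
    · exact row_shift hl hm.2 hm.1.ne' (by lia)
    · rw [← neg_mem_iff, show -(κ l - κ m + -(e : ℤ)) = κ m - κ l + e by ring]
      exact row_shift hm.2 hl hm.1.ne (by lia)

theorem separation_criterion_general (hℓ : 1 ≤ ℓ) (κ : ℕ → ℤ) (hZ : 1 ∉ Z) :
    SeparatesMod Z n ℓ κ ↔ ∀ S T : StdTableau ℓ n,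
      (S = T ↔ ∀ k ∈ Finset.Icc 1 n, content κ S k - content κ T k ∈ Z) := by
  refine ⟨fun h S T => ⟨?_, StdTableau.eq_of_content_sub_mem h⟩, fun H =>
    separatesMod_of_content_injective hℓ hZ fun S T => (H S T).2⟩
  rintro rfl k _
  simp

/-- `(K, t)` separates `Std(P_n)` if and only if standard tableaux are
distinguished by the quantum integers of their content sequences. -/
theorem separation_criterion (n ℓ : ℕ) (hℓ : 1 ≤ ℓ) (κ : ℕ → ℤ)
    (K : Type) [Field K] (t : Kˣ) :
    (((∏ d ∈ Finset.Icc 1 n, qint (t : K) (d : ℤ)) *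
        ∏ l ∈ Finset.range ℓ, ∏ m ∈ Finset.Ioo l ℓ,
          ∏ d ∈ Finset.Ioo (-(n : ℤ)) (n : ℤ), qint (t : K) (κ l - κ m + d)) ≠ 0) ↔
    ∀ S T : StdTableau ℓ n,
      (S = T ↔ ∀ r ∈ Finset.Icc 1 n,
        qint (t : K) (content κ S r) = qint (t : K) (content κ T r)) := by
  simp only [qint_eq_qint_iff]
  exact (separatesF_iff_separatesMod t n ℓ κ).trans
    (separation_criterion_general hℓ κ (one_notMem_qintZeros t))

end Paper
end

section
/- Let O be a commutative ring with a distinguished invertible element t, let 2 ≤ e < ∞, and let R_n(O) be the deformed cyclotomic quiver Hecke algebra attached to a multicharge κ ∈ Z^ℓ. Then for every 1 ≤ r ≤ n and every i ∈ I^n there exists a finite multiset X_r(i) of integers, each divisible by e, such that ∏_{c ∈ X_r(i)} (y_r − [c]_t) · f_i = 0 in R_n(O). -/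
open scoped BigOperators
open scoped Classical

namespace Paper

/-!
For `d` divisible by `e`, the substitution `y ↦ y^⟨d⟩ = t^d y + [d]_t` permutes the factors
`y - [c]_t` with `e ∣ c` up to units, because `[c + d]_t = t^d [c]_t + [d]_t`. One argues by
induction on `r`, passing from `y_r` to `y_{r+1}` by an intertwiner.

If `i_r ≠ i_{r+1}`, then `y_{r+1} ψ_r = ψ_r y_r` carries the statement for `y_r` and `s_r · i` to
`y_{r+1}` acting on `ψ_r² f_i`. Here `ψ_r²` is a product of at most two factors of the form
`y_r^⟨d⟩ - y_{r+1}` or `y_{r+1}^⟨d⟩ - y_r` with `e ∣ d`. On the kernel of such a factor `y_{r+1}`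
agrees with a shift of `y_r`, for which the statement is known, so each factor can be removed.

If `i_r = i_{r+1}`, then `θ = (y_{r+1} - y_r) ψ_r f_i - f_i` satisfies `y_{r+1} θ = θ y_r` and
`θ² = f_i`, so the statement for `y_r` on `f_i θ = θ` becomes the one for `y_{r+1}` on `f_i`.
-/

theorem qintU_natCast {O : Type*} [CommRing O] (t : Oˣ) (k : ℕ) :
    qintU t k = ∑ j ∈ Finset.range k, (t : O) ^ j := by
  simp [qintU]

theorem qintU_neg_natCast {O : Type*} [CommRing O] (t : Oˣ) (k : ℕ) :
    qintU t (-k) = -∑ j ∈ Finset.range k, ((t ^ (-((j : ℤ) + 1)) : Oˣ) : O) := by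
  rcases k.eq_zero_or_pos with rfl | hk
  · simp [qintU]
  · simp only [qintU, if_neg (show ¬(0 : ℤ) ≤ -k by lia), neg_neg, Int.toNat_natCast]

@[simp]
theorem qintU_zero {O : Type*} [CommRing O] (t : Oˣ) : qintU t 0 = 0 := by
  simp [qintU]

theorem qintU_add_one {O : Type*} [CommRing O] (t : Oˣ) (d : ℤ) :
    qintU t (d + 1) = qintU t d + ((t ^ d : Oˣ) : O) := by
  obtain ⟨k, rfl | rfl⟩ : ∃ k : ℕ, d = k ∨ d = -(k + 1 : ℕ) :=
    ⟨if 0 ≤ d then d.toNat else (-d - 1).toNat, by split_ifs <;> lia⟩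
  · rw [← Nat.cast_succ, qintU_natCast, qintU_natCast, Finset.sum_range_succ, zpow_natCast,
      Units.val_pow_eq_pow_val]
  · rw [show -((k + 1 : ℕ) : ℤ) + 1 = -k by lia, qintU_neg_natCast, qintU_neg_natCast,
      Finset.sum_range_succ, Nat.cast_succ]
    ring

theorem qintU_add {O : Type*} [CommRing O] (t : Oˣ) (c d : ℤ) :
    qintU t (c + d) = ((t ^ d : Oˣ) : O) * qintU t c + qintU t d := by
  have zpow_add_val (b : ℤ) :
      ((t ^ (b + d) : Oˣ) : O) = ((t ^ d : Oˣ) : O) * ((t ^ b : Oˣ) : O) := by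
    rw [zpow_add, mul_comm, Units.val_mul]
  induction c using Int.induction_on with
  | zero => simp
  | succ k ih =>
    rw [add_right_comm, qintU_add_one, qintU_add_one, ih, zpow_add_val]
    ring
  | pred k ih =>
    have upper := qintU_add_one t (-k - 1 + d)
    have lower := qintU_add_one t (-k - 1)
    rw [sub_add_cancel] at lower
    rw [add_right_comm, sub_add_cancel, ih, lower, zpow_add_val] at upper
    linear_combination -upper

theorem qintU_neg {O : Type*} [CommRing O] (t : Oˣ) (d : ℤ) :
    qintU t (-d) = -(((t ^ (-d) : Oˣ) : O) * qintU t d) := by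
  have h := qintU_add t d (-d)
  rw [add_neg_cancel, qintU_zero] at h
  exact (neg_eq_of_add_eq_zero_right h.symm).symm

theorem prod_map_filter {α M : Type*} [Monoid M] (L : List α) (p : α → Prop) [DecidablePred p]
    (f : α → M) :
    ((L.filter p).map f).prod = (L.map fun a => if p a then f a else 1).prod := by
  induction L with
  | nil => rfl
  | cons a L ih => by_cases h : p a <;> simp [h, ih]

section QuantumNilpotent

variable {R : Type*} [CommRing R] (t : Rˣ) {A : Type*} [Ring A] [Algebra R A]

/-- The product `∏_{c ∈ X} (y - [c]_t)` in an algebra, over a finite multiset `X` of integers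
given as a list since the algebra need not be commutative. -/
def quantumProd (X : List ℤ) (y : A) : A :=
  (X.map fun c => y - algebraMap R A (qintU t c)).prod

/-- The shifted element `y^⟨d⟩ = t^d y + [d]_t` of an algebra; `ydot` is the instance of it at a
generator of the free algebra. -/
def quantumShift (d : ℤ) (y : A) : A :=
  t ^ d • y + algebraMap R A (qintU t d)

/-- The element `y` is *quantum nilpotent* on `m` if `∏_{c ∈ X} (y - [c]_t)` annihilates `m` from
the left for some finite multiset `X` of multiples of `e`. -/
def QuantumNilpotent (e : ℤ) (y m : A) : Prop :=
  ∃ X : List ℤ, (∀ c ∈ X, e ∣ c) ∧ quantumProd t X y * m = 0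

theorem quantumProd_cons (c : ℤ) (X : List ℤ) (y : A) :
    quantumProd t (c :: X) y = (y - algebraMap R A (qintU t c)) * quantumProd t X y :=
  List.prod_cons

theorem quantumProd_append (X Y : List ℤ) (y : A) :
    quantumProd t (X ++ Y) y = quantumProd t X y * quantumProd t Y y := by
  simp [quantumProd]

variable {t}

theorem semiconjBy_quantumProd {s q p : A} (h : SemiconjBy s q p) (X : List ℤ) :
    SemiconjBy s (quantumProd t X q) (quantumProd t X p) := by
  induction X with
  | nil => exact SemiconjBy.one_right s
  | cons c X ih =>
    rw [quantumProd_cons, quantumProd_cons]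
    exact (h.sub_right (Algebra.commute_algebraMap_right _ s)).mul_right ih

theorem commute_quantumShift {y a : A} (h : Commute y a) (d : ℤ) :
    Commute (quantumShift t d y) a :=
  (h.smul_left _).add_left (Algebra.commute_algebraMap_left _ a)

theorem quantumShift_sub_qintU (c d : ℤ) (y : A) :
    quantumShift t d y - algebraMap R A (qintU t (c + d)) =
      t ^ d • (y - algebraMap R A (qintU t c)) := by
  rw [qintU_add, quantumShift, map_add, map_mul, add_sub_add_right_eq_sub, smul_sub,
    Units.smul_def _ (algebraMap R A _), Algebra.smul_def]

theorem quantumProd_map_add_quantumShift (X : List ℤ) (d : ℤ) (y : A) :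
    quantumProd t (X.map (· + d)) (quantumShift t d y) =
      (t ^ d) ^ X.length • quantumProd t X y := by
  induction X with
  | nil => simp [quantumProd]
  | cons c X ih =>
    rw [List.map_cons, quantumProd_cons, quantumShift_sub_qintU, ih, quantumProd_cons,
      List.length_cons, pow_succ', smul_mul_smul_comm]

theorem quantumShift_neg_sub (d : ℤ) (p q : A) :
    quantumShift t (-d) q - p = -(t ^ (-d) • (quantumShift t d p - q)) := by
  rw [quantumShift, quantumShift, smul_sub, smul_add, smul_smul, ← zpow_add, neg_add_cancel,
    zpow_zero, one_smul, qintU_neg, map_neg, map_mul, Units.smul_def _ (algebraMap R A _),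
    Algebra.smul_def]
  abel

theorem quantumProd_mul_congr {p q m : A} (hpq : Commute p q) (h : p * m = q * m) (X : List ℤ) :
    quantumProd t X p * m = quantumProd t X q * m := by
  induction X with
  | nil => rfl
  | cons c X ih =>
    set a := algebraMap R A (qintU t c)
    have comm : Commute (p - a) (quantumProd t X q) :=
      semiconjBy_quantumProd (hpq.sub_left (Algebra.commute_algebraMap_left _ q)) X
    calc quantumProd t (c :: X) p * m = (p - a) * (quantumProd t X q * m) := by
          rw [quantumProd_cons, mul_assoc, ih]
      _ = quantumProd t X q * ((p - a) * m) := by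
          rw [← mul_assoc, comm.eq, mul_assoc]
      _ = quantumProd t X q * ((q - a) * m) := by
          rw [sub_mul, h, ← sub_mul]
      _ = quantumProd t (c :: X) q * m := by
          have : Commute (q - a) (quantumProd t X q) := semiconjBy_quantumProd
            ((Commute.refl q).sub_left (Algebra.commute_algebraMap_left _ q)) X
          rw [← mul_assoc, ← this.eq, quantumProd_cons]

namespace QuantumNilpotent

variable {e : ℤ} {p q m : A}

theorem mul_right (h : QuantumNilpotent t e q m) (a : A) : QuantumNilpotent t e q (m * a) := by
  obtain ⟨X, hXe, hX⟩ := h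
  exact ⟨X, hXe, by rw [← mul_assoc, hX, zero_mul]⟩

theorem semiconjBy_mul (h : QuantumNilpotent t e q m) {s : A} (hs : SemiconjBy s q p) :
    QuantumNilpotent t e p (s * m) := by
  obtain ⟨X, hXe, hX⟩ := h
  exact ⟨X, hXe, by rw [← mul_assoc, ← (semiconjBy_quantumProd hs X).eq, mul_assoc, hX, mul_zero]⟩

theorem of_quantumProd_mul {X : List ℤ} (hX : ∀ c ∈ X, e ∣ c)
    (h : QuantumNilpotent t e p (quantumProd t X p * m)) : QuantumNilpotent t e p m := by
  obtain ⟨Y, hYe, hY⟩ := h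
  refine ⟨Y ++ X, fun c hc => ?_, by rw [quantumProd_append, mul_assoc, hY]⟩
  exact (List.mem_append.1 hc).elim (hYe c) (hX c)

protected theorem quantumShift (h : QuantumNilpotent t e q m) {d : ℤ} (hd : e ∣ d) :
    QuantumNilpotent t e (quantumShift t d q) m := by
  obtain ⟨X, hXe, hX⟩ := h
  refine ⟨X.map (· + d), ?_, ?_⟩
  · simpa only [List.forall_mem_map] using fun c hc => dvd_add (hXe c hc) hd
  · rw [quantumProd_map_add_quantumShift, smul_mul_assoc, hX, smul_zero]

theorem congr (h : QuantumNilpotent t e q m) (hpq : Commute p q) (hm : p * m = q * m) :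
    QuantumNilpotent t e p m := by
  obtain ⟨X, hXe, hX⟩ := h
  exact ⟨X, hXe, by rw [quantumProd_mul_congr hpq hm, hX]⟩

theorem of_quantumShift_sub_mul (hq : QuantumNilpotent t e q m) (hpq : Commute p q) {d : ℤ}
    (hd : e ∣ d) (h : QuantumNilpotent t e p ((quantumShift t d q - p) * m)) :
    QuantumNilpotent t e p m := by
  obtain ⟨X, hXe, hX⟩ := h
  have hp : Commute p (quantumShift t d q) := (commute_quantumShift hpq.symm d).symm
  have comm : Commute (quantumProd t X p) (quantumShift t d q - p) :=
    (semiconjBy_quantumProd (hp.symm.sub_left (Commute.refl p)) X).symm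
  have agree : p * (quantumProd t X p * m) = quantumShift t d q * (quantumProd t X p * m) := by
    rw [← sub_eq_zero, ← neg_eq_zero, ← sub_mul, ← neg_mul, neg_sub, ← mul_assoc, ← comm.eq,
      mul_assoc, hX]
  have hqX : QuantumNilpotent t e q (quantumProd t X p * m) :=
    hq.semiconjBy_mul (semiconjBy_quantumProd hpq.symm X).symm
  exact of_quantumProd_mul hXe ((hqX.quantumShift hd).congr hp agree)

theorem of_sub_quantumShift_mul (hq : QuantumNilpotent t e q m) (hpq : Commute p q) {d : ℤ}
    (hd : e ∣ d) (h : QuantumNilpotent t e p ((quantumShift t d p - q) * m)) :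
    QuantumNilpotent t e p m := by
  have unit_central : Commute (-(t ^ (-d) • (1 : A))) p :=
    ((Commute.one_left p).smul_left _).neg_left
  refine hq.of_quantumShift_sub_mul hpq (hd.neg_right : e ∣ -d) ?_
  simpa [quantumShift_neg_sub, smul_mul_assoc] using h.semiconjBy_mul unit_central

end QuantumNilpotent

end QuantumNilpotent

/-- The intertwiner `θ = (p - q) s - f`, used with `p = y_{r+1}`, `q = y_r`, `s = ψ_r f` and
`f = f_i` when `i_r = i_{r+1}`. -/
def nilIntertwiner {A : Type*} [Ring A] (p q s f : A) : A :=
  (p - q) * s - f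

section NilIntertwiner

variable {A : Type*} [Ring A] {p q s f : A}

theorem semiconjBy_nilIntertwiner (hpq : Commute p q) (hqf : Commute q f)
    (hps : p * s = s * q + f) : SemiconjBy (nilIntertwiner p q s f) q p := by
  have comm : (p - q) * p = p * (p - q) := ((Commute.refl p).sub_left hpq.symm).eq
  calc nilIntertwiner p q s f * q = (p - q) * (s * q) - f * q := by
        rw [nilIntertwiner, sub_mul, mul_assoc]
    _ = (p - q) * p * s - p * f := by
        rw [eq_sub_of_add_eq hps.symm, ← hqf.eq]
        noncomm_ring
    _ = p * nilIntertwiner p q s f := by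
        rw [comm, mul_assoc, nilIntertwiner, ← mul_sub]

theorem nilIntertwiner_mul_self (hpf : Commute p f) (hqf : Commute q f) (hff : f * f = f)
    (hfs : f * s = s) (hsf : s * f = s) (hss : s * s = 0) (hps : p * s = s * q + f)
    (hsp : s * p = q * s + f) : nilIntertwiner p q s f * nilIntertwiner p q s f = f := by
  have hsps : s * p * s = s := by rw [hsp, add_mul, mul_assoc, hss, mul_zero, zero_add, hfs]
  have hsqs : s * q * s = -s := by
    rw [eq_sub_of_add_eq hps.symm, sub_mul, mul_assoc, hss, mul_zero, zero_sub, hfs]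
  have hfd : f * (p - q) = (p - q) * f := (hpf.symm.sub_right hqf.symm).eq
  calc nilIntertwiner p q s f * nilIntertwiner p q s f
      = (p - q) * (s * p * s - s * q * s) - (p - q) * (s * f) - f * (p - q) * s + f * f := by
        rw [nilIntertwiner]
        noncomm_ring
    _ = f := by
        rw [hsps, hsqs, hsf, hfd, mul_assoc, hfs, hff]
        noncomm_ring

end NilIntertwiner

theorem swapSeq_pL {n e : ℕ} (i : Fin n → ZMod e) (r : Fin (n - 1)) :
    swapSeq i r (pL r) = i (pR r) := by
  simp [swapSeq]

theorem swapSeq_pR {n e : ℕ} (i : Fin n → ZMod e) (r : Fin (n - 1)) :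
    swapSeq i r (pR r) = i (pL r) := by
  simp [swapSeq, pL, pR]

theorem swapSeq_eq_self {n e : ℕ} {i : Fin n → ZMod e} {r : Fin (n - 1)}
    (h : i (pL r) = i (pR r)) : swapSeq i r = i := by
  funext k
  simp only [swapSeq]
  split_ifs with hL hR
  · rw [hL, h]
  · rw [hR, h]
  · rfl

theorem dvd_one_add_val_sub_val {e : ℕ} [NeZero e] {a b : ZMod e} (h : b = a + 1) :
    (e : ℤ) ∣ 1 + ((a.val : ℤ) - b.val) := by
  rw [← ZMod.intCast_zmod_eq_zero_iff_dvd]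
  simp [h]

section Relations

variable (R : Type*) [CommRing R] (t : Rˣ) (n e ℓ : ℕ) [NeZero e] (κ : ℕ → ℤ)

theorem mkAlgHom_ydot (d : ℤ) (k : Fin n) :
    RingQuot.mkAlgHom R (DefKLRRel R t n e ℓ κ) (ydot R t d k) =
      quantumShift t d (DyGen R t n e ℓ κ k) := by
  simp [ydot, quantumShift, DyGen, Units.smul_def, Algebra.smul_def]

theorem quantumProd_DyGen_zero_mul_DfGen (h : 0 < n) (i : Fin n → ZMod e) :
    quantumProd t (((List.range ℓ).filter fun l => (κ l : ZMod e) = i ⟨0, h⟩).map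
      fun l => κ l - (i ⟨0, h⟩).val) (DyGen R t n e ℓ κ ⟨0, h⟩) * DfGen R t n e ℓ κ i = 0 := by
  have rel := RingQuot.mkAlgHom_rel R (DefKLRRel.cyc (R := R) (t := t) (ℓ := ℓ) (κ := κ) h i)
  rw [map_mul, map_zero, map_list_prod, List.map_map] at rel
  rw [quantumProd, List.map_map, prod_map_filter, DfGen, ← rel]
  congr! 4 with l
  by_cases hl : (κ l : ZMod e) = i ⟨0, h⟩ <;> simp [hl, DyGen]

theorem commute_DyGen (k m : Fin n) : Commute (DyGen R t n e ℓ κ k) (DyGen R t n e ℓ κ m) := by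
  simpa only [commute_iff_eq, DyGen, map_mul] using RingQuot.mkAlgHom_rel R (DefKLRRel.yy k m)

theorem commute_DyGen_DfGen (k : Fin n) (i : Fin n → ZMod e) :
    Commute (DyGen R t n e ℓ κ k) (DfGen R t n e ℓ κ i) := by
  simpa only [commute_iff_eq, DyGen, DfGen, map_mul] using
    RingQuot.mkAlgHom_rel R (DefKLRRel.yE k i)

theorem DfGen_mul_self (i : Fin n → ZMod e) :
    DfGen R t n e ℓ κ i * DfGen R t n e ℓ κ i = DfGen R t n e ℓ κ i := by
  simpa only [DfGen, map_mul] using RingQuot.mkAlgHom_rel R (DefKLRRel.idem i)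

theorem DpsiGen_mul_DfGen (r : Fin (n - 1)) (i : Fin n → ZMod e) :
    DpsiGen R t n e ℓ κ r * DfGen R t n e ℓ κ i =
      DfGen R t n e ℓ κ (swapSeq i r) * DpsiGen R t n e ℓ κ r := by
  simpa only [DpsiGen, DfGen, map_mul] using RingQuot.mkAlgHom_rel R (DefKLRRel.psiE r i)

variable {n e} {r : Fin (n - 1)} {i : Fin n → ZMod e}

theorem DpsiGen_mul_DyGen_mul_DfGen_of_eq (h : i (pL r) = i (pR r)) :
    DpsiGen R t n e ℓ κ r * DyGen R t n e ℓ κ (pR r) * DfGen R t n e ℓ κ i =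
      (DyGen R t n e ℓ κ (pL r) * DpsiGen R t n e ℓ κ r + 1) * DfGen R t n e ℓ κ i := by
  simpa only [DpsiGen, DyGen, DfGen, map_mul, map_add, map_one] using
    RingQuot.mkAlgHom_rel R (DefKLRRel.psiyEq r i h)

theorem DyGen_mul_DpsiGen_mul_DfGen_of_eq (h : i (pL r) = i (pR r)) :
    DyGen R t n e ℓ κ (pR r) * DpsiGen R t n e ℓ κ r * DfGen R t n e ℓ κ i =
      (DpsiGen R t n e ℓ κ r * DyGen R t n e ℓ κ (pL r) + 1) * DfGen R t n e ℓ κ i := by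
  simpa only [DpsiGen, DyGen, DfGen, map_mul, map_add, map_one] using
    RingQuot.mkAlgHom_rel R (DefKLRRel.ypsiEq r i h)

theorem DyGen_mul_DpsiGen_mul_DfGen_of_ne (h : i (pL r) ≠ i (pR r)) :
    DyGen R t n e ℓ κ (pR r) * DpsiGen R t n e ℓ κ r * DfGen R t n e ℓ κ i =
      DpsiGen R t n e ℓ κ r * DyGen R t n e ℓ κ (pL r) * DfGen R t n e ℓ κ i := by
  simpa only [DpsiGen, DyGen, DfGen, map_mul] using
    RingQuot.mkAlgHom_rel R (DefKLRRel.ypsiNe r i h)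

theorem DpsiGen_sq_mul_DfGen_of_eq (h : i (pL r) = i (pR r)) :
    DpsiGen R t n e ℓ κ r ^ 2 * DfGen R t n e ℓ κ i = 0 := by
  simpa only [DpsiGen, DfGen, map_mul, map_pow, map_zero] using
    RingQuot.mkAlgHom_rel R (DefKLRRel.quadEq r i h)

theorem DpsiGen_sq_mul_DfGen_of_right (hr : i (pR r) = i (pL r) + 1)
    (hl : i (pL r) ≠ i (pR r) + 1) :
    DpsiGen R t n e ℓ κ r ^ 2 * DfGen R t n e ℓ κ i =
      (quantumShift t (1 + rhoI i r) (DyGen R t n e ℓ κ (pL r)) - DyGen R t n e ℓ κ (pR r)) *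
        DfGen R t n e ℓ κ i := by
  simpa only [DpsiGen, DyGen, DfGen, mkAlgHom_ydot, map_mul, map_pow, map_sub] using
    RingQuot.mkAlgHom_rel R (DefKLRRel.quadR (t := t) (ℓ := ℓ) (κ := κ) r i hr hl)

theorem DpsiGen_sq_mul_DfGen_of_left (hr : i (pR r) ≠ i (pL r) + 1)
    (hl : i (pL r) = i (pR r) + 1) :
    DpsiGen R t n e ℓ κ r ^ 2 * DfGen R t n e ℓ κ i =
      (quantumShift t (1 - rhoI i r) (DyGen R t n e ℓ κ (pR r)) - DyGen R t n e ℓ κ (pL r)) *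
        DfGen R t n e ℓ κ i := by
  simpa only [DpsiGen, DyGen, DfGen, mkAlgHom_ydot, map_mul, map_pow, map_sub] using
    RingQuot.mkAlgHom_rel R (DefKLRRel.quadL (t := t) (ℓ := ℓ) (κ := κ) r i hl hr)

theorem DpsiGen_sq_mul_DfGen_of_both (hr : i (pR r) = i (pL r) + 1)
    (hl : i (pL r) = i (pR r) + 1) :
    DpsiGen R t n e ℓ κ r ^ 2 * DfGen R t n e ℓ κ i =
      (quantumShift t (1 + rhoI i r) (DyGen R t n e ℓ κ (pL r)) - DyGen R t n e ℓ κ (pR r)) *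
        ((quantumShift t (1 - rhoI i r) (DyGen R t n e ℓ κ (pR r)) - DyGen R t n e ℓ κ (pL r)) *
          DfGen R t n e ℓ κ i) := by
  simpa only [DpsiGen, DyGen, DfGen, mkAlgHom_ydot, map_mul, map_pow, map_sub, mul_assoc] using
    RingQuot.mkAlgHom_rel R (DefKLRRel.quadBoth (t := t) (ℓ := ℓ) (κ := κ) r i hr hl)

theorem DpsiGen_sq_mul_DfGen_of_none (h : i (pL r) ≠ i (pR r)) (hr : i (pR r) ≠ i (pL r) + 1)
    (hl : i (pL r) ≠ i (pR r) + 1) :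
    DpsiGen R t n e ℓ κ r ^ 2 * DfGen R t n e ℓ κ i = DfGen R t n e ℓ κ i := by
  simpa only [DpsiGen, DfGen, map_mul, map_pow] using
    RingQuot.mkAlgHom_rel R (DefKLRRel.quadNone r i h hr hl)

end Relations

section Induction

variable {R : Type*} [CommRing R] {t : Rˣ} {n e ℓ : ℕ} [NeZero e] {κ : ℕ → ℤ}

theorem quantumNilpotent_DyGen_zero (h : 0 < n) (i : Fin n → ZMod e) :
    QuantumNilpotent t e (DyGen R t n e ℓ κ ⟨0, h⟩) (DfGen R t n e ℓ κ i) := by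
  refine ⟨_, fun c hc => ?_, quantumProd_DyGen_zero_mul_DfGen R t n e ℓ κ h i⟩
  obtain ⟨l, hl, rfl⟩ := List.mem_map.1 hc
  rw [← ZMod.intCast_zmod_eq_zero_iff_dvd]
  simp [of_decide_eq_true (List.mem_filter.1 hl).2]

variable {r : Fin (n - 1)} {i : Fin n → ZMod e}

theorem quantumNilpotent_DyGen_pR_of_eq (hi : i (pL r) = i (pR r))
    (h : QuantumNilpotent t e (DyGen R t n e ℓ κ (pL r)) (DfGen R t n e ℓ κ i)) :
    QuantumNilpotent t e (DyGen R t n e ℓ κ (pR r)) (DfGen R t n e ℓ κ i) := by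
  set p := DyGen R t n e ℓ κ (pR r)
  set q := DyGen R t n e ℓ κ (pL r)
  set f := DfGen R t n e ℓ κ i
  set ψ := DpsiGen R t n e ℓ κ r
  have hpf : Commute p f := commute_DyGen_DfGen R t n e ℓ κ (pR r) i
  have hqf : Commute q f := commute_DyGen_DfGen R t n e ℓ κ (pL r) i
  have hff : f * f = f := DfGen_mul_self R t n e ℓ κ i
  have hψf : ψ * f = f * ψ := by
    simpa only [swapSeq_eq_self hi] using DpsiGen_mul_DfGen R t n e ℓ κ r i
  have hfs : f * (ψ * f) = ψ * f := by rw [← mul_assoc, ← hψf, mul_assoc, hff]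
  have hsf : ψ * f * f = ψ * f := by rw [mul_assoc, hff]
  have hss : ψ * f * (ψ * f) = 0 := by
    rw [mul_assoc, hfs, ← mul_assoc, ← pow_two, DpsiGen_sq_mul_DfGen_of_eq R t ℓ κ hi]
  have hps : p * (ψ * f) = ψ * f * q + f := by
    rw [← mul_assoc, DyGen_mul_DpsiGen_mul_DfGen_of_eq R t ℓ κ hi, mul_assoc ψ f, ← hqf.eq]
    noncomm_ring
  have hsp : ψ * f * p = q * (ψ * f) + f := by
    rw [mul_assoc, ← hpf.eq, ← mul_assoc, DpsiGen_mul_DyGen_mul_DfGen_of_eq R t ℓ κ hi]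
    noncomm_ring
  have hpq : Commute p q := commute_DyGen R t n e ℓ κ _ _
  have hθf : f * nilIntertwiner p q (ψ * f) f = nilIntertwiner p q (ψ * f) f := by
    rw [nilIntertwiner, mul_sub, hff, ← mul_assoc, (hpf.symm.sub_right hqf.symm).eq, mul_assoc, hfs]
  have := (h.mul_right (nilIntertwiner p q (ψ * f) f)).semiconjBy_mul
    (semiconjBy_nilIntertwiner hpq hqf hps)
  rwa [hθf, nilIntertwiner_mul_self hpf hqf hff hfs hsf hss hps hsp] at this

theorem quantumNilpotent_DyGen_pR_DpsiGen_sq (hi : i (pL r) ≠ i (pR r))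
    (h : QuantumNilpotent t e (DyGen R t n e ℓ κ (pL r)) (DfGen R t n e ℓ κ (swapSeq i r))) :
    QuantumNilpotent t e (DyGen R t n e ℓ κ (pR r))
      (DpsiGen R t n e ℓ κ r ^ 2 * DfGen R t n e ℓ κ i) := by
  set p := DyGen R t n e ℓ κ (pR r)
  set q := DyGen R t n e ℓ κ (pL r)
  set g := DfGen R t n e ℓ κ (swapSeq i r)
  set ψ := DpsiGen R t n e ℓ κ r
  have hgg : g * g = g := DfGen_mul_self R t n e ℓ κ (swapSeq i r)
  have hswap : swapSeq i r (pL r) ≠ swapSeq i r (pR r) := by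
    rw [swapSeq_pL, swapSeq_pR]
    exact hi.symm
  have intertwine : SemiconjBy (ψ * g) q p := by
    rw [SemiconjBy, mul_assoc, ← (commute_DyGen_DfGen R t n e ℓ κ _ _).eq, ← mul_assoc, ← mul_assoc,
      DyGen_mul_DpsiGen_mul_DfGen_of_ne R t ℓ κ hswap]
  have hsq : ψ ^ 2 * DfGen R t n e ℓ κ i = ψ * g * (g * ψ) := by
    rw [pow_two, mul_assoc, DpsiGen_mul_DfGen, ← mul_assoc (ψ * g), mul_assoc ψ g, hgg, mul_assoc]
  rw [hsq]
  exact (h.mul_right ψ).semiconjBy_mul intertwine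

theorem quantumNilpotent_DyGen_pR_of_ne (hi : i (pL r) ≠ i (pR r))
    (h : QuantumNilpotent t e (DyGen R t n e ℓ κ (pL r)) (DfGen R t n e ℓ κ i))
    (hswap : QuantumNilpotent t e (DyGen R t n e ℓ κ (pL r)) (DfGen R t n e ℓ κ (swapSeq i r))) :
    QuantumNilpotent t e (DyGen R t n e ℓ κ (pR r)) (DfGen R t n e ℓ κ i) := by
  have hsq := quantumNilpotent_DyGen_pR_DpsiGen_sq hi hswap
  have hpq := commute_DyGen R t n e ℓ κ (pR r) (pL r)
  have dvd_right (hr : i (pR r) = i (pL r) + 1) : (e : ℤ) ∣ 1 + rhoI i r :=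
    dvd_one_add_val_sub_val hr
  have dvd_left (hl : i (pL r) = i (pR r) + 1) : (e : ℤ) ∣ 1 - rhoI i r := by
    rw [rhoI, sub_eq_add_neg, neg_sub]
    exact dvd_one_add_val_sub_val hl
  by_cases hr : i (pR r) = i (pL r) + 1 <;> by_cases hl : i (pL r) = i (pR r) + 1
  · rw [DpsiGen_sq_mul_DfGen_of_both R t ℓ κ hr hl] at hsq
    have comm : Commute (DyGen R t n e ℓ κ (pL r))
        (quantumShift t (1 - rhoI i r) (DyGen R t n e ℓ κ (pR r)) - DyGen R t n e ℓ κ (pL r)) :=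
      (commute_quantumShift hpq _).symm.sub_right (Commute.refl _)
    exact h.of_sub_quantumShift_mul hpq (dvd_left hl)
      ((h.semiconjBy_mul comm.symm).of_quantumShift_sub_mul hpq (dvd_right hr) hsq)
  · rw [DpsiGen_sq_mul_DfGen_of_right R t ℓ κ hr hl] at hsq
    exact h.of_quantumShift_sub_mul hpq (dvd_right hr) hsq
  · rw [DpsiGen_sq_mul_DfGen_of_left R t ℓ κ hr hl] at hsq
    exact h.of_sub_quantumShift_mul hpq (dvd_left hl) hsq
  · rwa [DpsiGen_sq_mul_DfGen_of_none R t ℓ κ hi hr hl] at hsq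

theorem quantumNilpotent_DyGen_pR
    (h : ∀ i, QuantumNilpotent t e (DyGen R t n e ℓ κ (pL r)) (DfGen R t n e ℓ κ i))
    (i : Fin n → ZMod e) :
    QuantumNilpotent t e (DyGen R t n e ℓ κ (pR r)) (DfGen R t n e ℓ κ i) := by
  by_cases hi : i (pL r) = i (pR r)
  · exact quantumNilpotent_DyGen_pR_of_eq hi (h i)
  · exact quantumNilpotent_DyGen_pR_of_ne hi (h i) (h (swapSeq i r))

end Induction

/-- in the deformed cyclotomic quiver Hecke algebra `R_n(O)`, for every
`r` and `i ∈ I^n` there is a finite multiset (here: list) `X` of multiples of `e` with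
`∏_{c ∈ X} (y_r - [c]_t) · f_i = 0`. -/
theorem y_nilpotent_deformed (R : Type) [CommRing R] (t : Rˣ) (n e ℓ : ℕ)
    (hℓ : 1 ≤ ℓ) (he : 2 ≤ e) [NeZero e] (κ : ℕ → ℤ) (r : Fin n) (i : Fin n → ZMod e) :
    ∃ X : List ℤ, (∀ c ∈ X, (e : ℤ) ∣ c) ∧
      ((X.map fun c => DyGen R t n e ℓ κ r - algebraMap R _ (qintU t c)).prod) *
        DfGen R t n e ℓ κ i = 0 := by
  change QuantumNilpotent t (e : ℤ) (DyGen R t n e ℓ κ r) (DfGen R t n e ℓ κ i)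
  obtain ⟨k, hk⟩ := r
  induction k generalizing i with
  | zero => exact quantumNilpotent_DyGen_zero hk i
  | succ k ih => exact quantumNilpotent_DyGen_pR (r := ⟨k, by lia⟩) (ih · (by lia)) i

end Paper
end
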